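/- arXiv:1010.5002 — 3 statements merged into one kernel-verified Lean document; each statement's English description precedes it below -/
import Mathlib

section
/- For every natural number n, there is an isomorphism of ℂ-algebras ℂl_{2n+1} ≅ M(2^n, ℂ) × M(2^n, ℂ), where M(2^n, ℂ) is the algebra of 2^n × 2^n complex matrices. -/
/-!
The proof is by induction on `n`, through the periodicity `Cl(Q ⊥ ⟨-1, -1⟩) ≃ M₂(Cl(Q))`,
valid for every complex quadratic form `Q` with finite-dimensional Clifford algebra
(`cliffordPeriodicity`).  The map is induced by
`(z, a, b) ↦ !![ι z, a + i b; -(a - i b), -ι z]`, whose square is the scalar `Q z - a² - b²`.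
It is surjective, since its image contains the matrix units and the elements `ι z • E₀₀`
(`periodicityHom_surjective`), and both sides have dimension `4 * dim Cl(Q)`: the Clifford
algebra of an orthogonal sum is the graded tensor product of the Clifford algebras, and that of
`⟨-1, -1⟩` is a quaternion algebra (`finrank_clifford_prod`).

The base case is `ℂl₁ = ℂ[e] / (e² + 1) ≃ ℂ × ℂ`, where `e ↦ (i, -i)` (`cliffordOneEquiv`).
For the inductive step, `M₂(A × A) ≃ M₂(A) × M₂(A)` and `M₂(M_N(ℂ)) ≃ M_{2N}(ℂ)`.
-/

/-- The quadratic form `Q_k(z) = -(z₁² + ⋯ + z_k²)` on `ℂ^k`, whose Clifford algebra is the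
complex Clifford algebra `ℂl_k` of dimension `k`. -/
noncomputable def complexCliffordForm (k : ℕ) : QuadraticForm ℂ (Fin k → ℂ) :=
  QuadraticMap.weightedSumSquares ℂ (fun _ : Fin k => (-1 : ℂ))

/-- The complex Clifford algebra `ℂl_k`. -/
abbrev ComplexCliffordAlgebra (k : ℕ) := CliffordAlgebra (complexCliffordForm k)

open scoped TensorProduct

section Periodicity

variable {V : Type*} [AddCommGroup V] [Module ℂ V] (Q : QuadraticForm ℂ V)

/-- The orthogonal sum of `Q` with the form `-(a² + b²)` on `ℂ × ℂ`. -/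
noncomputable abbrev addTwo : QuadraticForm ℂ (V × (ℂ × ℂ)) :=
  QuadraticMap.prod Q (CliffordAlgebraQuaternion.Q (-1) (-1))

/-- Adding two dimensions multiplies the dimension of the Clifford algebra by `4`, the dimension
of the quaternion algebra `Cl(⟨-1, -1⟩)`. -/
lemma finrank_clifford_prod :
    Module.finrank ℂ (CliffordAlgebra (addTwo Q)) =
      Module.finrank ℂ (CliffordAlgebra Q) * 4 := by
  rw [(CliffordAlgebra.prodEquiv Q
      (CliffordAlgebraQuaternion.Q (-1 : ℂ) (-1))).toLinearEquiv.finrank_eq,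
    (GradedTensorProduct.of ℂ (CliffordAlgebra.evenOdd Q) (CliffordAlgebra.evenOdd
      (CliffordAlgebraQuaternion.Q (-1 : ℂ) (-1)))).symm.finrank_eq,
    Module.finrank_tensorProduct,
    (CliffordAlgebraQuaternion.equiv (c₁ := (-1 : ℂ)) (c₂ := -1)).toLinearEquiv.finrank_eq,
    QuaternionAlgebra.finrank_eq_four]

lemma finite_clifford_prod [Module.Finite ℂ (CliffordAlgebra Q)] :
    Module.Finite ℂ (CliffordAlgebra (addTwo Q)) := by
  have : Module.Finite ℂ (CliffordAlgebra (CliffordAlgebraQuaternion.Q (-1 : ℂ) (-1))) :=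
    Module.Finite.equiv
      (CliffordAlgebraQuaternion.equiv (c₁ := (-1 : ℂ)) (c₂ := -1)).symm.toLinearEquiv
  have : Module.Finite ℂ (CliffordAlgebra Q ⊗[ℂ]
      CliffordAlgebra (CliffordAlgebraQuaternion.Q (-1 : ℂ) (-1))) := inferInstance
  exact Module.Finite.equiv ((GradedTensorProduct.of ℂ (CliffordAlgebra.evenOdd Q)
    (CliffordAlgebra.evenOdd (CliffordAlgebraQuaternion.Q (-1 : ℂ) (-1)))).trans
    (CliffordAlgebra.prodEquiv Q
      (CliffordAlgebraQuaternion.Q (-1 : ℂ) (-1))).symm.toLinearEquiv)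

/-- The linear map `(z, a, b) ↦ !![ι z, a + i b; -(a - i b), -ι z]`. -/
noncomputable def periodicityGen :
    V × (ℂ × ℂ) →ₗ[ℂ] Matrix (Fin 2) (Fin 2) (CliffordAlgebra Q) where
  toFun m := !![CliffordAlgebra.ι Q m.1, algebraMap ℂ _ (m.2.1 + Complex.I * m.2.2);
    algebraMap ℂ _ (-(m.2.1 - Complex.I * m.2.2)), -CliffordAlgebra.ι Q m.1]
  map_add' x y := by
    ext i j
    fin_cases i <;> fin_cases j <;> simp <;> abel_nf <;> simp [mul_add] <;> abel
  map_smul' c x := by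
    ext i j
    fin_cases i <;> fin_cases j
    · simp
    · simp [Algebra.smul_def, mul_add]
      simp only [← map_mul, mul_left_comm]
    · simp [Algebra.smul_def, mul_sub]
      simp only [← map_mul, mul_left_comm]
    · simp

lemma periodicityGen_sq (m : V × (ℂ × ℂ)) :
    periodicityGen Q m * periodicityGen Q m = algebraMap ℂ _ (addTwo Q m) := by
  obtain ⟨z, a, b⟩ := m
  have h1 : (a + Complex.I * b) * (-(a - Complex.I * b)) = -a * a - b * b := by
    linear_combination b * b * Complex.I_mul_I
  have h2 : (-(a - Complex.I * b)) * (a + Complex.I * b) = -a * a - b * b := by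
    linear_combination b * b * Complex.I_mul_I
  have hQ : addTwo Q (z, a, b) = Q z + (-a * a - b * b) := by
    simp [addTwo, QuadraticMap.prod_apply]; ring
  rw [hQ]
  ext i j
  simp only [periodicityGen, LinearMap.coe_mk, AddHom.coe_mk, Matrix.mul_apply,
    Fin.sum_univ_two, Matrix.algebraMap_matrix_apply]
  fin_cases i <;> fin_cases j
  · simp only [Fin.zero_eta, Matrix.of_apply, Matrix.cons_val', Matrix.cons_val_zero,
      Matrix.cons_val_one, Matrix.cons_val_fin_one, ← map_mul, h1,
      CliffordAlgebra.ι_sq_scalar, ← map_add, if_true]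
  · simp only [Fin.zero_eta, Fin.mk_one, Matrix.of_apply, Matrix.cons_val', Matrix.cons_val_zero,
      Matrix.cons_val_one, Matrix.cons_val_fin_one, mul_neg,
      Algebra.commutes (a + Complex.I * b) (CliffordAlgebra.ι Q z)]
    simp
  · simp only [Fin.zero_eta, Fin.mk_one, Matrix.of_apply, Matrix.cons_val', Matrix.cons_val_zero,
      Matrix.cons_val_one, Matrix.cons_val_fin_one, neg_mul,
      Algebra.commutes (-(a - Complex.I * b)) (CliffordAlgebra.ι Q z)]
    simp
  · simp only [Fin.mk_one, Matrix.of_apply, Matrix.cons_val', Matrix.cons_val_zero,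
      Matrix.cons_val_one, Matrix.cons_val_fin_one, ← map_mul, h2, neg_mul_neg,
      CliffordAlgebra.ι_sq_scalar, ← map_add, if_true]
    rw [add_comm]

/-- The algebra map `Cl(Q ⊥ ⟨-1, -1⟩) → M₂(Cl(Q))` extending `periodicityGen`. -/
noncomputable def periodicityHom :
    CliffordAlgebra (addTwo Q) →ₐ[ℂ] Matrix (Fin 2) (Fin 2) (CliffordAlgebra Q) :=
  CliffordAlgebra.lift _ ⟨periodicityGen Q, periodicityGen_sq Q⟩

lemma periodicityGen_mem (m : V × (ℂ × ℂ)) : periodicityGen Q m ∈ (periodicityHom Q).range :=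
  ⟨CliffordAlgebra.ι _ m, CliffordAlgebra.lift_ι_apply _ _ _⟩

lemma periodicityHom_surjective : Function.Surjective (periodicityHom Q) := by
  set R := (periodicityHom Q).range with hR
  -- The vectors `(1/2, -i/2)` and `(-1/2, -i/2)` of `ℂ × ℂ` are isotropic, and map to `E₀₁`, `E₁₀`.
  have h01 : Matrix.single 0 1 1 ∈ R := by
    convert periodicityGen_mem Q (0, 1 / 2, -(Complex.I / 2)) using 1
    have e1 : (1 / 2 + Complex.I * -(Complex.I / 2) : ℂ) = 1 := by
      linear_combination (-1 / 2 : ℂ) * Complex.I_mul_I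
    have e2 : (-(1 / 2 - Complex.I * -(Complex.I / 2)) : ℂ) = 0 := by
      linear_combination (-1 / 2 : ℂ) * Complex.I_mul_I
    simp only [periodicityGen, LinearMap.coe_mk, AddHom.coe_mk, e1, e2]
    ext i j
    fin_cases i <;> fin_cases j <;> simp
  have h10 : Matrix.single 1 0 1 ∈ R := by
    convert periodicityGen_mem Q (0, -1 / 2, -(Complex.I / 2)) using 1
    have e1 : (-1 / 2 + Complex.I * -(Complex.I / 2) : ℂ) = 0 := by
      linear_combination (-1 / 2 : ℂ) * Complex.I_mul_I
    have e2 : (-(-1 / 2 - Complex.I * -(Complex.I / 2)) : ℂ) = 1 := by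
      linear_combination (-1 / 2 : ℂ) * Complex.I_mul_I
    simp only [periodicityGen, LinearMap.coe_mk, AddHom.coe_mk, e1, e2]
    ext i j
    fin_cases i <;> fin_cases j <;> simp
  have h00 : Matrix.single 0 0 1 ∈ R := by
    simpa using R.mul_mem h01 h10
  -- The elements `b` with `b E₀₀` in the image form a subalgebra containing every `ι z`.
  have hb : ∀ b : CliffordAlgebra Q, Matrix.single 0 0 b ∈ R := by
    intro b
    induction b using CliffordAlgebra.induction with
    | algebraMap r =>
      have := R.smul_mem h00 r
      rwa [Matrix.smul_single, ← Algebra.algebraMap_eq_smul_one] at this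
    | ι z =>
      convert R.mul_mem (periodicityGen_mem Q (z, 0, 0)) h00 using 1
      ext i j
      fin_cases i <;> fin_cases j <;> simp [periodicityGen, Matrix.mul_apply]
    | mul a b ha hb => simpa using R.mul_mem ha hb
    | add a b ha hb => simpa [Matrix.single_add] using R.add_mem ha hb
  have hi : ∀ i : Fin 2, Matrix.single i 0 1 ∈ R := by
    intro i; fin_cases i; exacts [h00, h10]
  have hj : ∀ j : Fin 2, Matrix.single 0 j 1 ∈ R := by
    intro j; fin_cases j; exacts [h00, h01]
  intro M
  change M ∈ R
  rw [Matrix.matrix_eq_sum_single M]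
  refine R.sum_mem fun i _ => R.sum_mem fun j _ => ?_
  simpa using R.mul_mem (R.mul_mem (hi i) (hb (M i j))) (hj j)

/-- Periodicity: `Cl(Q ⊥ ⟨-1, -1⟩) ≃ M₂(Cl(Q))`. -/
noncomputable def cliffordPeriodicity [Module.Finite ℂ (CliffordAlgebra Q)] :
    CliffordAlgebra (addTwo Q) ≃ₐ[ℂ] Matrix (Fin 2) (Fin 2) (CliffordAlgebra Q) :=
  AlgEquiv.ofBijective (periodicityHom Q) <| by
    have := finite_clifford_prod Q
    refine ⟨?_, periodicityHom_surjective Q⟩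
    refine (LinearMap.injective_iff_surjective_of_finrank_eq_finrank
      (f := (periodicityHom Q).toLinearMap) ?_).2 (periodicityHom_surjective Q)
    rw [finrank_clifford_prod, Module.finrank_matrix]
    simp [mul_comm]

end Periodicity

/-- Splitting off the last two coordinates of `ℂ^(k+2)`. -/
noncomputable def complexCliffordFormIsometry (k : ℕ) :
    (complexCliffordForm (k + 2)).IsometryEquiv (addTwo (complexCliffordForm k)) where
  toFun v := (fun i => v i.castSucc.castSucc, v (Fin.last k).castSucc, v (Fin.last (k + 1)))
  invFun p := Fin.snoc (α := fun _ => ℂ) (Fin.snoc (α := fun _ => ℂ) p.1 p.2.1) p.2.2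
  map_add' _ _ := rfl
  map_smul' _ _ := rfl
  left_inv v := by
    ext i
    refine Fin.lastCases ?_ (fun i => ?_) i
    · simp
    · refine Fin.lastCases ?_ (fun i => ?_) i <;> simp
  right_inv p := by
    ext <;> simp
  map_app' v := by
    simp [addTwo, complexCliffordForm, QuadraticMap.weightedSumSquares_apply,
      Fin.sum_univ_castSucc, QuadraticMap.prod_apply]
    ring

/-- The algebra map `ℂl₁ → ℂ × ℂ` sending the generator to `(i, -i)`. -/
noncomputable def cliffordOneHom : ComplexCliffordAlgebra 1 →ₐ[ℂ] ℂ × ℂ :=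
  CliffordAlgebra.lift _ ⟨((Complex.I • LinearMap.proj 0).prod (-Complex.I • LinearMap.proj 0)), by
    intro m
    have h : Complex.I * m 0 * (Complex.I * m 0) = -(m 0 * m 0) := by
      linear_combination m 0 * m 0 * Complex.I_mul_I
    ext <;> simp [complexCliffordForm, QuadraticMap.weightedSumSquares_apply, h]⟩

lemma cliffordOneHom_ι (m : Fin 1 → ℂ) :
    cliffordOneHom (CliffordAlgebra.ι _ m) = (Complex.I * m 0, -Complex.I * m 0) := by
  exact CliffordAlgebra.lift_ι_apply _ _ _

/-- The isomorphism `ℂl₁ ≃ ℂ × ℂ`. -/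
noncomputable def cliffordOneEquiv : ComplexCliffordAlgebra 1 ≃ₐ[ℂ] ℂ × ℂ := by
  let e : ComplexCliffordAlgebra 1 := CliffordAlgebra.ι _ (fun _ => 1)
  have he : e * e = -1 := by
    have h : complexCliffordForm 1 (fun _ => 1) = -1 := by
      simp [complexCliffordForm, QuadraticMap.weightedSumSquares_apply]
    rw [CliffordAlgebra.ι_sq_scalar, h, map_neg, map_one]
  have hι : ∀ m : Fin 1 → ℂ, CliffordAlgebra.ι (complexCliffordForm 1) m = m 0 • e := by
    intro m
    rw [← map_smul]
    congr 1
    ext i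
    fin_cases i
    simp
  -- The inverse sends `(1, 0)` and `(0, 1)` to the central idempotents `(1 ∓ i e) / 2`.
  let g : ℂ × ℂ → ComplexCliffordAlgebra 1 := fun p =>
    ((p.1 + p.2) / 2) • 1 + (-Complex.I * (p.1 - p.2) / 2) • e
  refine AlgEquiv.ofBijective cliffordOneHom (Function.bijective_iff_has_inverse.2 ⟨g, ?_, ?_⟩)
  · intro x
    induction x using CliffordAlgebra.left_induction with
    | algebraMap r => simp [g, Algebra.algebraMap_eq_smul_one]
    | add x y hx hy =>
      conv_rhs => rw [← hx, ← hy]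
      simp only [g, map_add, Prod.fst_add, Prod.snd_add]
      module
    | ι_mul x m hx =>
      conv_rhs => rw [← hx]
      rw [map_mul, cliffordOneHom_ι, hι]
      simp only [g, Prod.fst_mul, Prod.snd_mul, mul_add, smul_mul_smul_comm, he, mul_one]
      match_scalars
      · ring
      · linear_combination
          (-m 0 * ((cliffordOneHom x).1 + (cliffordOneHom x).2) / 2) * Complex.I_mul_I
  · intro p
    simp only [g, e, map_add, map_smul, map_one, cliffordOneHom_ι]
    ext
    · simp
      linear_combination (-(p.1 - p.2) / 2) * Complex.I_mul_I
    · simp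
      linear_combination ((p.1 - p.2) / 2) * Complex.I_mul_I

/-- Matrices over a product algebra are pairs of matrices. -/
noncomputable def matrixProdEquiv (ι A B : Type*) [Fintype ι] [DecidableEq ι]
    [Ring A] [Algebra ℂ A] [Ring B] [Algebra ℂ B] :
    Matrix ι ι (A × B) ≃ₐ[ℂ] Matrix ι ι A × Matrix ι ι B :=
  AlgEquiv.ofBijective ((AlgHom.fst ℂ A B).mapMatrix.prod (AlgHom.snd ℂ A B).mapMatrix) <| by
    refine Function.bijective_iff_has_inverse.2
      ⟨fun p => Matrix.of fun i j => (p.1 i j, p.2 i j), fun M => ?_, fun p => ?_⟩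
    · ext <;> simp
    · ext <;> simp

/-- Block matrices: `M₂(M_{2^n}(ℂ)) ≃ M_{2^(n+1)}(ℂ)`. -/
noncomputable def matrixBlockEquiv (n : ℕ) :
    Matrix (Fin 2) (Fin 2) (Matrix (Fin (2 ^ n)) (Fin (2 ^ n)) ℂ) ≃ₐ[ℂ]
      Matrix (Fin (2 ^ (n + 1))) (Fin (2 ^ (n + 1))) ℂ :=
  (Matrix.compAlgEquiv (Fin 2) (Fin (2 ^ n)) ℂ ℂ).trans
    (Matrix.reindexAlgEquiv ℂ ℂ (finProdFinEquiv.trans (finCongr (pow_succ' 2 n).symm)))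

/-- For every `n`, the complex Clifford algebra `ℂl_{2n+1}` is isomorphic as a `ℂ`-algebra to
the product algebra `M(2^n, ℂ) × M(2^n, ℂ)`. -/
theorem complexCliffordAlgebra_odd_iso_matrix_prod (n : ℕ) :
    Nonempty (ComplexCliffordAlgebra (2 * n + 1) ≃ₐ[ℂ]
      (Matrix (Fin (2 ^ n)) (Fin (2 ^ n)) ℂ × Matrix (Fin (2 ^ n)) (Fin (2 ^ n)) ℂ)) := by
  induction n with
  | zero =>
    let u : ℂ ≃ₐ[ℂ] Matrix (Fin 1) (Fin 1) ℂ :=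
      AlgEquiv.ofBijective (Algebra.ofId ℂ _) <| Function.bijective_iff_has_inverse.2
        ⟨fun M => M 0 0, fun c => by simp [Algebra.ofId_apply, Matrix.algebraMap_matrix_apply],
          fun M => by
            ext i j
            fin_cases i; fin_cases j
            simp [Algebra.ofId_apply, Matrix.algebraMap_matrix_apply]⟩
    exact ⟨cliffordOneEquiv.trans (u.prodCongr u)⟩
  | succ n ih =>
    obtain ⟨f⟩ := ih
    have : Module.Finite ℂ (CliffordAlgebra (complexCliffordForm (2 * n + 1))) :=
      Module.Finite.equiv f.symm.toLinearEquiv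
    exact ⟨(CliffordAlgebra.equivOfIsometry (complexCliffordFormIsometry (2 * n + 1))).trans <|
      (cliffordPeriodicity _).trans <| f.mapMatrix.trans <|
      (matrixProdEquiv _ _ _).trans ((matrixBlockEquiv n).prodCongr (matrixBlockEquiv n))⟩
end

section
/- For every natural number n, every simple module over the complex Clifford algebra ℂl_{2n+1} has complex dimension 2^n, and there are exactly two isomorphism classes of simple ℂl_{2n+1}-modules. -/
/-! ### Clifford generators of matrix algebras -/

/-- A family `f` generates the `ℂ`-algebra `B` and satisfies the relations of an orthonormal basis
in a Clifford algebra: `f i ^ 2 = -1`, and distinct members anticommute. -/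
structure IsCliffordGen {B : Type} [Ring B] [Algebra ℂ B] {k : ℕ} (f : Fin k → B) : Prop where
  sq : ∀ i, f i * f i = -1
  anti : ∀ i j, i ≠ j → f i * f j + f j * f i = 0
  gen : Algebra.adjoin ℂ (Set.range f) = ⊤

namespace IsCliffordGen

variable {B C : Type} [Ring B] [Algebra ℂ B] [Ring C] [Algebra ℂ C] {k : ℕ} {f : Fin k → B}

theorem map (hf : IsCliffordGen f) (e : B ≃ₐ[ℂ] C) : IsCliffordGen (fun i => e (f i)) where
  sq i := by rw [← map_mul, hf.sq, map_neg, map_one]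
  anti i j h := by rw [← map_mul, ← map_mul, ← map_add, hf.anti i j h, map_zero]
  gen := by
    have h := congrArg (Subalgebra.map (e : B →ₐ[ℂ] C)) hf.gen
    rw [AlgHom.map_adjoin, ← Set.range_comp, Algebra.map_top,
      (AlgHom.range_eq_top _).2 e.surjective] at h
    exact h

/-- The square of a combination of the generators is the value of the Clifford form; the proof
symmetrizes the double sum, so it computes twice the square. -/
theorem sum_mul_sum (hf : IsCliffordGen f) (v : Fin k → ℂ) :
    (∑ i, v i • f i) * (∑ i, v i • f i) = algebraMap ℂ B (complexCliffordForm k v) := by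
  have hpair : ∀ i j, f i * f j + f j * f i = if i = j then (-2 : ℂ) • (1 : B) else 0 := by
    intro i j
    split_ifs with h
    · subst h
      rw [hf.sq, neg_smul, two_smul]; abel
    · exact hf.anti i j h
  have h1 : (∑ i, v i • f i) * (∑ i, v i • f i) = ∑ i, ∑ j, (v i * v j) • (f i * f j) := by
    simp_rw [Finset.sum_mul_sum, smul_mul_smul_comm]
  have h2 : (∑ i, v i • f i) * (∑ i, v i • f i) = ∑ i, ∑ j, (v i * v j) • (f j * f i) := by
    rw [h1, Finset.sum_comm]
    simp_rw [mul_comm (v _) (v _)]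
  have h3 : (2 : ℂ) • ((∑ i, v i • f i) * (∑ i, v i • f i)) =
      (2 : ℂ) • algebraMap ℂ B (complexCliffordForm k v) := by
    rw [two_smul]
    nth_rw 1 [h1]
    rw [h2]
    simp_rw [← Finset.sum_add_distrib, ← smul_add, hpair]
    simp only [smul_ite, smul_zero, Finset.sum_ite_eq, Finset.mem_univ, if_true]
    rw [Algebra.algebraMap_eq_smul_one, complexCliffordForm,
      QuadraticMap.weightedSumSquares_apply, Finset.sum_smul, Finset.smul_sum]
    refine Finset.sum_congr rfl fun i _ => ?_
    simp only [smul_smul, smul_eq_mul]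
    congr 1; ring
  exact smul_right_injective B (two_ne_zero (α := ℂ)) h3

/-- The relations give a surjection from the Clifford algebra by its universal property. -/
theorem exists_surjective (hf : IsCliffordGen f) :
    ∃ φ : ComplexCliffordAlgebra k →ₐ[ℂ] B, Function.Surjective φ := by
  let l : (Fin k → ℂ) →ₗ[ℂ] B := Fintype.linearCombination ℂ f
  have hl : ∀ v, l v * l v = algebraMap ℂ B (complexCliffordForm k v) := hf.sum_mul_sum
  refine ⟨CliffordAlgebra.lift _ ⟨l, hl⟩, ?_⟩
  rw [← AlgHom.range_eq_top, eq_top_iff, ← hf.gen, Algebra.adjoin_le_iff]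
  rintro _ ⟨i, rfl⟩
  refine ⟨CliffordAlgebra.ι _ (Pi.single i 1), ?_⟩
  change CliffordAlgebra.lift _ ⟨l, hl⟩ _ = _
  rw [CliffordAlgebra.lift_ι_apply]
  simp [l, Fintype.linearCombination_apply_single]

/-- Adding two generators replaces the algebra by `2 × 2` matrices over it: the old generators are
tensored with a `2 × 2` matrix of square `1` that anticommutes with the two new ones. -/
theorem matrix_two (hf : IsCliffordGen f) :
    ∃ g : Fin (k + 2) → Matrix (Fin 2) (Fin 2) B, IsCliffordGen g := by
  let ii : B := algebraMap ℂ B Complex.I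
  have hii : ii * ii = -1 := by
    rw [← map_mul, Complex.I_mul_I, map_neg, map_one]
  have hcomm : ∀ x, x * ii = ii * x := fun x => (Algebra.commutes _ x).symm
  let a : Matrix (Fin 2) (Fin 2) B := !![ii, 0; 0, -ii]
  let b : Matrix (Fin 2) (Fin 2) B := !![0, 1; -1, 0]
  let c : Fin k → Matrix (Fin 2) (Fin 2) B := fun j => !![0, f j; f j, 0]
  let g : Fin (k + 2) → Matrix (Fin 2) (Fin 2) B := Fin.cons a (Fin.cons b c)
  have haa : a * a = -1 := by
    simp [a, hii, Matrix.one_fin_two]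
  have hbb : b * b = -1 := by
    simp [b, Matrix.one_fin_two]
  have hcc : ∀ j, c j * c j = -1 := fun j => by
    simp [c, Matrix.one_fin_two, hf.sq]
  have hab : a * b + b * a = 0 := by
    ext i j; fin_cases i <;> fin_cases j <;> simp [a, b]
  have hac : ∀ j, a * c j + c j * a = 0 := fun l => by
    ext i j; fin_cases i <;> fin_cases j <;> simp [a, c, hcomm]
  have hbc : ∀ j, b * c j + c j * b = 0 := fun l => by
    ext i j; fin_cases i <;> fin_cases j <;> simp [b, c]
  have hcd : ∀ i j, i ≠ j → c i * c j + c j * c i = 0 := fun p q h => by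
    ext i j; fin_cases i <;> fin_cases j <;> simp [c, hf.anti p q h]
  refine ⟨g, ?_, ?_, ?_⟩
  · simp only [Fin.forall_fin_succ, g, Fin.cons_zero, Fin.cons_succ]
    exact ⟨haa, hbb, hcc⟩
  · intro i j
    refine Fin.cases ?_ (fun i => Fin.cases ?_ (fun i => ?_) i) i <;>
    refine Fin.cases ?_ (fun j => Fin.cases ?_ (fun j => ?_) j) j <;>
    simp only [g, Fin.cons_zero, Fin.cons_succ] <;> intro h
    · exact absurd rfl h
    · exact hab
    · exact hac _
    · rw [add_comm]; exact hab
    · exact absurd rfl h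
    · exact hbc _
    · rw [add_comm]; exact hac _
    · rw [add_comm]; exact hbc _
    · exact hcd _ _ fun h' => h (by rw [h'])
  · set S := Algebra.adjoin ℂ (Set.range g) with hS
    have hg : ∀ i, g i ∈ S := fun i => Algebra.subset_adjoin ⟨i, rfl⟩
    have ha : a ∈ S := hg 0
    have hb : b ∈ S := hg 1
    have hc : ∀ j, c j ∈ S := fun j => hg j.succ.succ
    -- The four matrix units lie in `S`: `1 - i a` is twice the projection `E₀₀`, and `b` moves it.
    have hIi : Complex.I • ii = (-1 : B) := by
      rw [Algebra.smul_def]; exact hii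
    have h00 : (!![1, 0; 0, 0] : Matrix (Fin 2) (Fin 2) B) ∈ S := by
      have : (!![1, 0; 0, 0] : Matrix (Fin 2) (Fin 2) B) =
          (2⁻¹ : ℂ) • (1 - Complex.I • a) := by
        ext i j; fin_cases i <;> fin_cases j <;> simp [a, hIi]
        rw [← add_smul]; norm_num
      rw [this]
      exact S.smul_mem (S.sub_mem S.one_mem (S.smul_mem ha _)) _
    have h11 : (!![0, 0; 0, 1] : Matrix (Fin 2) (Fin 2) B) ∈ S := by
      have : (!![0, 0; 0, 1] : Matrix (Fin 2) (Fin 2) B) = 1 - !![1, 0; 0, 0] := by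
        ext i j; fin_cases i <;> fin_cases j <;> simp
      rw [this]
      exact S.sub_mem S.one_mem h00
    have h01 : (!![0, 1; 0, 0] : Matrix (Fin 2) (Fin 2) B) ∈ S := by
      have : (!![0, 1; 0, 0] : Matrix (Fin 2) (Fin 2) B) = !![1, 0; 0, 0] * b := by
        simp [b]
      rw [this]
      exact S.mul_mem h00 hb
    have h10 : (!![0, 0; 1, 0] : Matrix (Fin 2) (Fin 2) B) ∈ S := by
      have : (!![0, 0; 1, 0] : Matrix (Fin 2) (Fin 2) B) = -(!![0, 0; 0, 1] * b) := by
        simp [b]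
      rw [this]
      exact S.neg_mem (S.mul_mem h11 hb)
    have hscal : ∀ x : B, (Matrix.scalar (Fin 2) x) ∈ S := by
      let s : B →ₐ[ℂ] Matrix (Fin 2) (Fin 2) B := Matrix.scalarAlgHom (Fin 2) ℂ
      have hle : (⊤ : Subalgebra ℂ B) ≤ S.comap s := by
        rw [← hf.gen, Algebra.adjoin_le_iff]
        rintro _ ⟨j, rfl⟩
        change Matrix.scalar (Fin 2) (f j) ∈ S
        -- Multiplying `c j = f j ⊗ σ` by `σ` removes the tensor factor `σ`, as `σ ^ 2 = 1`.
        have : Matrix.scalar (Fin 2) (f j) = c j * (!![0, 1; 0, 0] + !![0, 0; 1, 0]) := by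
          ext p q; fin_cases p <;> fin_cases q <;> simp [c, Matrix.mul_apply]
        rw [this]
        exact S.mul_mem (hc j) (S.add_mem h01 h10)
      exact fun x => hle (Algebra.mem_top (x := x))
    rw [eq_top_iff]
    intro M _
    have : M = Matrix.scalar (Fin 2) (M 0 0) * !![1, 0; 0, 0] +
        Matrix.scalar (Fin 2) (M 0 1) * !![0, 1; 0, 0] +
        Matrix.scalar (Fin 2) (M 1 0) * !![0, 0; 1, 0] +
        Matrix.scalar (Fin 2) (M 1 1) * !![0, 0; 0, 1] := by
      ext p q; fin_cases p <;> fin_cases q <;> simp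
    rw [this]
    exact S.add_mem (S.add_mem (S.add_mem (S.mul_mem (hscal _) h00) (S.mul_mem (hscal _) h01))
      (S.mul_mem (hscal _) h10)) (S.mul_mem (hscal _) h11)

end IsCliffordGen

/-- The base case is `ℂ × ℂ`, generated by `(-i, i)`, whose two entries are the two scalars by which
the generator of `ℂl_1` can act on a line. -/
theorem exists_isCliffordGen (n : ℕ) :
    ∃ (J : Type) (_ : Fintype J) (_ : DecidableEq J),
      Fintype.card J = 2 ^ n ∧
      ∃ f : Fin (2 * n + 1) → Matrix J J (Bool → ℂ), IsCliffordGen f := by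
  induction n with
  | zero =>
    refine ⟨Unit, inferInstance, inferInstance, by simp,
      fun _ => Matrix.of fun _ _ b => if b then Complex.I else -Complex.I, ?_, ?_, ?_⟩
    · intro i; ext p q b; cases b <;> simp [Matrix.mul_apply]
    · intro i j h; exact absurd (Subsingleton.elim (α := Fin 1) i j) h
    · rw [eq_top_iff]
      intro M _
      set F : Matrix Unit Unit (Bool → ℂ) :=
        Matrix.of fun _ _ b => if b then Complex.I else -Complex.I with hF
      have hM : M = ((M () () true + M () () false) / 2) • 1 +
          ((M () () true - M () () false) / (2 * Complex.I)) • F := by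
        ext p q b
        have := Complex.I_ne_zero
        cases b <;> simp [hF] <;> field_simp <;> ring
      rw [hM]
      exact Subalgebra.add_mem _ (Subalgebra.smul_mem _ (Subalgebra.one_mem _) _)
        (Subalgebra.smul_mem _ (Algebra.subset_adjoin (Set.mem_range_self (0 : Fin 1))) _)
  | succ n ih =>
    obtain ⟨J, _, _, hJ, f, hf⟩ := ih
    obtain ⟨g, hg⟩ := hf.matrix_two
    refine ⟨Fin 2 × J, inferInstance, inferInstance, ?_, _,
      hg.map (Matrix.compAlgEquiv (Fin 2) J (Bool → ℂ) ℂ)⟩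
    rw [Fintype.card_prod, hJ, Fintype.card_fin, pow_succ, mul_comm]

/-- As a vector space the Clifford algebra is the exterior algebra, with a basis indexed by the
subsets of `Fin k`. -/
theorem finrank_complexCliffordAlgebra (k : ℕ) :
    Module.Finite ℂ (ComplexCliffordAlgebra k) ∧
      Module.finrank ℂ (ComplexCliffordAlgebra k) = 2 ^ k := by
  have : Invertible (2 : ℂ) := invertibleOfNonzero two_ne_zero
  let b := ((Pi.basisFun ℂ (Fin k)).ExteriorAlgebra).map
    (CliffordAlgebra.equivExterior (complexCliffordForm k)).symm
  refine ⟨Module.Finite.of_basis b, ?_⟩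
  rw [Module.finrank_eq_card_basis b, Fintype.card_finset, Fintype.card_fin]

/-- `ℂl_{2n+1} ≃ Mat_{2^n}(ℂ × ℂ)`: the surjection given by the generators is injective because both
sides have dimension `2^(2n+1)`. -/
theorem exists_algEquiv_matrix (n : ℕ) :
    ∃ (J : Type) (_ : Fintype J) (_ : DecidableEq J),
      Fintype.card J = 2 ^ n ∧
      Nonempty (ComplexCliffordAlgebra (2 * n + 1) ≃ₐ[ℂ] Matrix J J (Bool → ℂ)) := by
  obtain ⟨J, hJ1, hJ2, hJ, f, hf⟩ := exists_isCliffordGen n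
  obtain ⟨φ, hφ⟩ := hf.exists_surjective
  obtain ⟨hfin, hrank⟩ := finrank_complexCliffordAlgebra (2 * n + 1)
  refine ⟨J, hJ1, hJ2, hJ, ⟨AlgEquiv.ofBijective φ ⟨?_, hφ⟩⟩⟩
  have hdim : Module.finrank ℂ (ComplexCliffordAlgebra (2 * n + 1)) =
      Module.finrank ℂ (Matrix J J (Bool → ℂ)) := by
    rw [hrank, Module.finrank_matrix, hJ, Module.finrank_pi, Fintype.card_bool]
    ring
  exact (LinearMap.injective_iff_surjective_of_finrank_eq_finrank (f := φ.toLinearMap) hdim).2 hφ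

/-! ### Simple modules over a matrix algebra over `ℂ^K` -/

section MatRep

universe u v

variable {A J K : Type} [Ring A] [Algebra ℂ A] [Fintype J] [DecidableEq J]

/-- The column space `ℂ^J`, with `A ≃ Mat_J(ℂ^K)` acting through the `k`-th factor `ℂ` of `ℂ^K`.
It is lifted to an arbitrary universe, since the classification is wanted for simple modules in any
universe. -/
def MatRep (_ : A ≃ₐ[ℂ] Matrix J J (K → ℂ)) (_ : K) : Type u := ULift.{u} (J → ℂ)

/-- The action of `A` on the `k`-th column space, as a homomorphism into its endomorphisms. -/
noncomputable def matRepHom (e : A ≃ₐ[ℂ] Matrix J J (K → ℂ)) (k : K) :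
    A →ₐ[ℂ] Module.End ℂ (J → ℂ) :=
  (Matrix.toLinAlgEquiv' (R := ℂ) (n := J)).toAlgHom.comp
    ((Pi.evalAlgHom ℂ (fun _ : K => ℂ) k).mapMatrix.comp e.toAlgHom)

variable (e : A ≃ₐ[ℂ] Matrix J J (K → ℂ)) (k : K)

instance : AddCommGroup (MatRep.{u} e k) := inferInstanceAs (AddCommGroup (ULift.{u} (J → ℂ)))

instance : Module ℂ (MatRep.{u} e k) := inferInstanceAs (Module ℂ (ULift.{u} (J → ℂ)))

noncomputable instance : Module A (MatRep.{u} e k) :=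
  letI : Module (Module.End ℂ (J → ℂ)) (MatRep.{u} e k) :=
    inferInstanceAs (Module (Module.End ℂ (J → ℂ)) (ULift.{u} (J → ℂ)))
  Module.compHom _ (matRepHom e k).toRingHom

theorem matRep_smul_down (a : A) (v : MatRep.{u} e k) (i : J) :
    (a • v).down i = ∑ j, e a i j k * v.down j := rfl

theorem matRep_csmul_down (c : ℂ) (v : MatRep.{u} e k) (i : J) :
    (c • v).down i = c * v.down i := rfl

theorem matRep_add_down (v w : MatRep.{u} e k) (i : J) :
    (v + w).down i = v.down i + w.down i := rfl

theorem matRep_zero_down (i : J) : (0 : MatRep.{u} e k).down i = 0 := rfl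

variable {e k} in
theorem matRep_ext {v w : MatRep.{u} e k} (h : ∀ i, v.down i = w.down i) : v = w :=
  ULift.ext _ _ (funext h)

instance : IsScalarTower ℂ A (MatRep.{u} e k) where
  smul_assoc c a v := matRep_ext fun i => by
    simp only [matRep_csmul_down, matRep_smul_down, map_smul, Matrix.smul_apply, Pi.smul_apply,
      smul_eq_mul, Finset.mul_sum, mul_assoc]

theorem finrank_matRep : Module.finrank ℂ (MatRep.{u} e k) = Fintype.card J :=
  (LinearEquiv.finrank_eq (ULift.moduleEquiv : ULift.{u} (J → ℂ) ≃ₗ[ℂ] (J → ℂ))).trans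
    (Module.finrank_pi ℂ)

/-- The modules `MatRep e k` in different universes are isomorphic. -/
def matRepLift : MatRep.{u} e k ≃ₗ[A] MatRep.{v} e k where
  toFun x := ⟨x.down⟩
  invFun x := ⟨x.down⟩
  map_add' _ _ := rfl
  map_smul' _ _ := rfl

theorem alg_ext {a b : A} (h : ∀ i j l, e a i j l = e b i j l) : a = b :=
  e.injective (Matrix.ext fun i j => funext fun l => h i j l)

variable [DecidableEq K]

/-- The element of `A` whose matrix has `w` as its column `p` in the `k`-th factor, and is zero
elsewhere. -/
noncomputable def matCol (p : J) (w : J → ℂ) : A :=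
  e.symm (Matrix.of fun i q => if q = p then Pi.single k (w i) else 0)

theorem apply_matCol (p : J) (w : J → ℂ) (i q : J) (l : K) :
    e (matCol e k p w) i q l = if q = p then (if l = k then w i else 0) else 0 := by
  simp only [matCol, AlgEquiv.apply_symm_apply, Matrix.of_apply]
  split_ifs <;> simp_all

theorem isSimpleModule_matRep [Nonempty J] : IsSimpleModule A (MatRep.{u} e k) := by
  rw [isSimpleModule_iff_toSpanSingleton_surjective]
  refine ⟨⟨⟨⟨fun _ => 1⟩, 0, fun h => ?_⟩⟩, fun v hv w => ?_⟩
  · have := congrArg (fun x : MatRep.{u} e k => x.down (Classical.arbitrary J)) h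
    exact one_ne_zero (α := ℂ) this
  · obtain ⟨p, hp⟩ : ∃ p, v.down p ≠ 0 := by
      by_contra! h
      exact hv (matRep_ext h)
    refine ⟨matCol e k p (fun i => w.down i / v.down p), matRep_ext fun i => ?_⟩
    rw [LinearMap.toSpanSingleton_apply, matRep_smul_down]
    simp [apply_matCol, hp]

/-- The idempotent of the `k`-th factor acts by `1` on one module and by `0` on the other. -/
theorem isEmpty_matRep_equiv [Nonempty J] {k l : K} (h : k ≠ l) :
    IsEmpty (MatRep.{u} e k ≃ₗ[A] MatRep.{v} e l) := by
  refine ⟨fun φ => ?_⟩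
  let z : A := e.symm (Matrix.scalar J (Pi.single k 1))
  let x : MatRep.{u} e k := ⟨fun _ => 1⟩
  have hz : ∀ i j m, e z i j m = if i = j then (if m = k then 1 else 0) else 0 := by
    intro i j m
    simp only [z, AlgEquiv.apply_symm_apply, Matrix.scalar_apply, Matrix.diagonal_apply]
    split_ifs <;> simp_all
  have h1 : z • x = x := matRep_ext fun i => by
    rw [matRep_smul_down]; simp [hz]
  have h2 : z • φ x = 0 := matRep_ext fun i => by
    rw [matRep_smul_down, matRep_zero_down]; simp [hz, h.symm]
  rw [← map_smul, h1, map_eq_zero_iff φ φ.injective] at h2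
  have := congrArg (fun x : MatRep.{u} e k => x.down (Classical.arbitrary J)) h2
  exact one_ne_zero (α := ℂ) this

/-- Every simple `A`-module `N` is one of the column spaces: if the diagonal matrix unit `E_pp` of the
`k`-th factor does not kill `x : N`, then sending a column `v` to (the matrix with `p`-th column `v`)
`• x` is a nonzero map of simple modules, and Schur's lemma applies. -/
theorem exists_equiv_matRep [Nonempty J] [Fintype K] (N : Type v) [AddCommGroup N] [Module A N]
    [IsSimpleModule A N] : ∃ k : K, Nonempty (N ≃ₗ[A] MatRep.{u} e k) := by
  have : Nontrivial N := IsSimpleModule.nontrivial A N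
  obtain ⟨x, hx⟩ := exists_ne (0 : N)
  -- The diagonal matrix units of all factors sum to `1`, so one of them does not kill `x`.
  obtain ⟨k, p, hkp⟩ : ∃ k p, matCol e k p (Pi.single p 1) • x ≠ 0 := by
    by_contra! h
    have hsum : ∑ k, ∑ p, matCol e k p (Pi.single p 1) = 1 := alg_ext e fun i j l => by
      simp [Matrix.sum_apply, apply_matCol, Matrix.one_apply, Pi.single_apply]
      split_ifs <;> simp
    apply hx
    rw [← one_smul A x, ← hsum, Finset.sum_smul]
    refine Finset.sum_eq_zero fun k _ => ?_
    rw [Finset.sum_smul]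
    exact Finset.sum_eq_zero fun p _ => h k p
  let g : MatRep.{u} e k →ₗ[A] N :=
    { toFun := fun v => matCol e k p v.down • x
      map_add' := fun v w => by
        rw [← add_smul]
        congr 1
        refine alg_ext e fun i j l => ?_
        rw [map_add, Matrix.add_apply, Pi.add_apply]
        simp only [apply_matCol, matRep_add_down]
        split_ifs <;> simp
      map_smul' := fun a v => by
        rw [RingHom.id_apply, ← mul_smul]
        congr 1
        refine alg_ext e fun i j l => ?_
        rw [map_mul, Matrix.mul_apply, Finset.sum_apply]
        simp only [Pi.mul_apply, apply_matCol, matRep_smul_down]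
        split_ifs with h1 h2
        · subst h2; rfl
        · simp
        · simp }
  have hg : g ≠ 0 := fun h => hkp (by
    have := LinearMap.congr_fun h (⟨Pi.single p 1⟩ : MatRep.{u} e k)
    exact this)
  have := isSimpleModule_matRep.{u} e k
  exact ⟨k, ⟨(LinearEquiv.ofBijective g (LinearMap.bijective_of_ne_zero hg)).symm⟩⟩

end MatRep

/-- Every simple module over the complex Clifford algebra `ℂl_{2n+1}` has complex dimension
`2 ^ n`, and there are exactly two isomorphism classes of simple `ℂl_{2n+1}`-modules. -/
theorem complexCliffordAlgebra_odd_simple_modules (n : ℕ) :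
    (∀ (M : Type) [AddCommGroup M] [Module ℂ M]
      [Module (ComplexCliffordAlgebra (2 * n + 1)) M]
      [IsScalarTower ℂ (ComplexCliffordAlgebra (2 * n + 1)) M]
      [IsSimpleModule (ComplexCliffordAlgebra (2 * n + 1)) M],
      Module.finrank ℂ M = 2 ^ n) ∧
    (∃ M₁ M₂ : ModuleCat (ComplexCliffordAlgebra (2 * n + 1)),
      IsSimpleModule (ComplexCliffordAlgebra (2 * n + 1)) M₁ ∧
      IsSimpleModule (ComplexCliffordAlgebra (2 * n + 1)) M₂ ∧
      IsEmpty (M₁ ≃ₗ[ComplexCliffordAlgebra (2 * n + 1)] M₂) ∧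
      ∀ N : ModuleCat (ComplexCliffordAlgebra (2 * n + 1)),
        IsSimpleModule (ComplexCliffordAlgebra (2 * n + 1)) N →
        (Nonempty (N ≃ₗ[ComplexCliffordAlgebra (2 * n + 1)] M₁) ∨
         Nonempty (N ≃ₗ[ComplexCliffordAlgebra (2 * n + 1)] M₂))) := by
  obtain ⟨J, _, _, hJ, ⟨e⟩⟩ := exists_algEquiv_matrix n
  have : Nonempty J := Fintype.card_pos_iff.1 (by rw [hJ]; positivity)
  refine ⟨?_, ModuleCat.of _ (MatRep e true), ModuleCat.of _ (MatRep e false),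
    isSimpleModule_matRep e true, isSimpleModule_matRep e false, isEmpty_matRep_equiv e (by simp), ?_⟩
  · intro M _ _ _ _ _
    obtain ⟨k, ⟨φ⟩⟩ := exists_equiv_matRep.{0} e M
    rw [(φ.restrictScalars ℂ).finrank_eq, finrank_matRep, hJ]
  · intro N _
    obtain ⟨_ | _, ⟨φ⟩⟩ := exists_equiv_matRep.{0} e N
    · exact Or.inr ⟨φ.trans (matRepLift e false)⟩
    · exact Or.inl ⟨φ.trans (matRepLift e true)⟩
end

section
/- (Kuiper) Let H be an infinite-dimensional separable complex Hilbert space. Then the unitary group U(H), equipped with the norm topology induced from the bounded operators on H, is contractible. -/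
/-!
A family `u` of invertible operators, continuous in a parameter `x : X`, is called null here if it
is homotopic to the constant family `1` through families of invertible operators. Null families
form a group under pointwise multiplication. The identity family on the unitary group, which is
metrizable and hence paracompact, is shown to be null; taking unitary parts in the polar
decomposition then contracts the unitary group (`contractible_unitary_of_nullFamily`). No homotopy
type of CW complexes or Whitehead theorem is involved.

* If every `c x` is the identity on the range of an isometry `V x`, also depending continuously on
  `x`, then `c` is null (`nullFamily_of_fixes_right`). After removing an off-diagonal block this is
  an infinite swindle: both `1 ⊕ d⁻¹ ⊕ d` and `c ⊕ d⁻¹ ⊕ d` are null by Whitehead's lemma,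
  where `d = c ⊕ c ⊕ ⋯`.

* It therefore suffices to multiply `u` by null families until it fixes the range of some `V x`. This
  is possible as soon as there is a square-zero operator `B x` that maps the range of `V x`
  isometrically and satisfies `‖B u⋆ B‖ < 1` (`nullFamily_of_move`): rotations built from `B`
  carry `u V` to `B V` and then to `V`.

* The operator is `B = T C`. Here `T x` is an isometry glued, by square roots of a partition of unity,
  from locally constant isometries with mutually orthogonal ranges, and `C x` is a diagonal cutoff.
  Finitely many unitaries `u i` are handled at a time: the block lemma (`exists_block`) finds basis
  vectors indexed by a set of levels, and an isometry `T`, such that the images of these vectors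
  under `u i⋆ T` are almost orthogonal to the vectors themselves. The sets of levels all belong to one
  fixed nonprincipal ultrafilter on `ℕ`, so finitely many of them always have infinite intersection,
  which leaves room for `V x` (`exists_fixed`). Orthogonality of the ranges of overlapping local
  choices comes from covers coloured by cardinality (`exists_colored_cover`).
-/

set_option linter.unusedSectionVars false
set_option linter.unusedSimpArgs false

/-! ### Null families of invertible elements -/

section Null
variable {X A : Type*} [TopologicalSpace X] [NormedRing A] [CompleteSpace A]

/-- A family `f : X → A` of invertible elements is null if it is homotopic, through invertible
elements, to the constant family `1`. The homotopy is a continuous function on `[0, 1] × X`. -/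
def NullFamily (f : X → A) : Prop :=
  ∃ F : unitInterval × X → A, Continuous F ∧ (∀ z, IsUnit (F z)) ∧
    (∀ x, F (0, x) = 1) ∧ ∀ x, F (1, x) = f x

lemma NullFamily.isUnit {f : X → A} (hf : NullFamily f) (x : X) : IsUnit (f x) := by
  obtain ⟨F, -, hu, -, h1⟩ := hf
  exact h1 x ▸ hu _

lemma NullFamily.continuous {f : X → A} (hf : NullFamily f) : Continuous f := by
  obtain ⟨F, hc, -, -, h1⟩ := hf
  have : f = fun x => F (1, x) := funext fun x => (h1 x).symm
  rw [this]; fun_prop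

lemma NullFamily.mul {f g : X → A} (hf : NullFamily f) (hg : NullFamily g) :
    NullFamily (fun x => f x * g x) := by
  obtain ⟨F, hc, hu, h0, h1⟩ := hf
  obtain ⟨G, gc, gu, g0, g1⟩ := hg
  exact ⟨fun z => F z * G z, hc.mul gc, fun z => (hu z).mul (gu z),
    fun x => by simp [h0, g0], fun x => by simp [h1, g1]⟩

lemma continuous_ringInverse {Y : Type*} [TopologicalSpace Y] {F : Y → A} (hF : Continuous F)
    (hu : ∀ z, IsUnit (F z)) : Continuous fun z => Ring.inverse (F z) := by
  refine continuous_iff_continuousAt.2 fun z => ?_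
  obtain ⟨w, hw⟩ := hu z
  exact ContinuousAt.comp (f := F) (g := Ring.inverse)
    (hw ▸ NormedRing.inverse_continuousAt w) hF.continuousAt

lemma NullFamily.inverse {f : X → A} (hf : NullFamily f) :
    NullFamily (fun x => Ring.inverse (f x)) := by
  obtain ⟨F, hc, hu, h0, h1⟩ := hf
  exact ⟨fun z => Ring.inverse (F z), continuous_ringInverse hc hu,
    fun z => (hu z).ringInverse, fun x => by simp [h0], fun x => by simp [h1]⟩

lemma NullFamily.of_mul_left {f g : X → A} (hf : NullFamily f)
    (h : NullFamily (fun x => f x * g x)) : NullFamily g := by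
  convert hf.inverse.mul h using 2 with x
  rw [← mul_assoc, Ring.inverse_mul_cancel _ (hf.isUnit x), one_mul]

lemma NullFamily.of_mul_right {f g : X → A} (hg : NullFamily g)
    (h : NullFamily (fun x => f x * g x)) : NullFamily f := by
  convert h.mul hg.inverse using 2 with x
  rw [mul_assoc, Ring.mul_inverse_cancel _ (hg.isUnit x), mul_one]

/-- `(1 + N) (1 - N) = 1 - N ^ 2` is invertible and its factors commute. -/
lemma isUnit_one_add_of_sq_lt {N : A} (h : ‖N * N‖ < 1) : IsUnit (1 + N) := by
  have h2 : IsUnit (1 - N * N) := isUnit_one_sub_of_norm_lt_one h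
  have hc : Commute (1 + N) (1 - N) := by
    simp only [Commute, SemiconjBy]; noncomm_ring
  have e : (1 + N) * (1 - N) = 1 - N * N := by noncomm_ring
  rw [← e] at h2
  exact (hc.isUnit_mul_iff.1 h2).1

/-- The homotopy is `1 + t N`. -/
lemma nullFamily_one_add [NormedAlgebra ℝ A] {N : X → A} (hN : Continuous N)
    (h : ∀ x, ‖N x * N x‖ < 1) : NullFamily (fun x => 1 + N x) := by
  refine ⟨fun z => 1 + (z.1 : ℝ) • N z.2, by fun_prop, fun z => isUnit_one_add_of_sq_lt ?_,
    fun x => by simp, fun x => by simp⟩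
  obtain ⟨⟨t, ht0, ht1⟩, x⟩ := z
  simp only [smul_mul_smul_comm, norm_smul, norm_mul, Real.norm_eq_abs, abs_of_nonneg ht0]
  have : t * t ≤ 1 := by nlinarith
  nlinarith [h x, norm_nonneg (N x * N x)]

lemma nullFamily_one_add_of_sq_zero [NormedAlgebra ℝ A] {N : X → A} (hN : Continuous N)
    (h : ∀ x, N x * N x = 0) : NullFamily (fun x => 1 + N x) :=
  nullFamily_one_add hN fun x => by simp [h x]

/-- Whitehead's lemma `diag (w, w⁻¹) ∼ 1`, in operator form. The two coordinate subspaces are the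
ranges of `Y` and `V`, with `Z` and `L` as the respective one-sided inverses; the idempotent
`Q = Z Y` allows the first one to be modelled on the range of `Q` only, and `w'` is the inverse of
`w`. The matrix is a product of six elementary matrices, each of the form `1 + N` with
`N ^ 2 = 0`. -/
lemma nullFamily_whitehead [NormedAlgebra ℝ A] {Y Z V L w w' Q : X → A}
    (hY : Continuous Y) (hZ : Continuous Z) (hV : Continuous V) (hL : Continuous L)
    (hw : Continuous w) (hw' : Continuous w')
    (hLV : ∀ x, L x * V x = 1) (hZV : ∀ x, Z x * V x = 0) (hLY : ∀ x, L x * Y x = 0)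
    (hZY : ∀ x, Z x * Y x = Q x) (hYQ : ∀ x, Y x * Q x = Y x) (hQZ : ∀ x, Q x * Z x = Z x)
    (hww' : ∀ x, w x * w' x = 1) (hw'w : ∀ x, w' x * w x = 1)
    (hQw : ∀ x, Q x * w x = w x * Q x) :
    NullFamily (fun x => 1 + Y x * (w x - 1) * Z x + V x * ((w' x - 1) * Q x) * L x) := by
  have e12 : ∀ y : X → A, Continuous y → NullFamily (fun x => 1 + Y x * y x * L x) := by
    intro y hy
    refine nullFamily_one_add_of_sq_zero (by fun_prop) fun x => ?_
    have : Y x * y x * L x * (Y x * y x * L x) = Y x * y x * (L x * Y x) * (y x * L x) := by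
      noncomm_ring
    rw [this, hLY]; simp
  have e21 : ∀ y : X → A, Continuous y → NullFamily (fun x => 1 + V x * y x * Z x) := by
    intro y hy
    refine nullFamily_one_add_of_sq_zero (by fun_prop) fun x => ?_
    have : V x * y x * Z x * (V x * y x * Z x) = V x * y x * (Z x * V x) * (y x * Z x) := by
      noncomm_ring
    rw [this, hZV]; simp
  have key := ((((e12 w hw).mul (e21 (fun x => - w' x) hw'.neg)).mul (e12 w hw)).mul
    (((e12 (fun _ => -1) continuous_const).mul (e21 (fun _ => 1) continuous_const)).mul
      (e12 (fun _ => -1) continuous_const)))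
  refine Eq.mp (congrArg _ (funext fun x => ?_)) key
  have hLV := hLV x
  have hZV := hZV x
  have hLY := hLY x
  have hZY := hZY x
  have hYQ := hYQ x
  have hQZ := hQZ x
  have hww' := hww' x
  have hw'w := hw'w x
  have hQw := hQw x
  have hQw' : Q x * w' x = w' x * Q x := by
    calc Q x * w' x = (w' x * w x) * Q x * w' x := by rw [hw'w, one_mul]
      _ = w' x * (Q x * w x) * w' x := by rw [hQw]; noncomm_ring
      _ = w' x * Q x * (w x * w' x) := by noncomm_ring
      _ = _ := by rw [hww', mul_one]
  generalize Y x = Y at *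
  generalize Z x = Z at *
  generalize V x = V at *
  generalize L x = L at *
  generalize w x = w at *
  generalize w' x = w' at *
  generalize Q x = Q at *
  have a1 : ∀ r, L * (V * r) = r := fun r => by rw [← mul_assoc, hLV, one_mul]
  have a2 : ∀ r, Z * (V * r) = 0 := fun r => by rw [← mul_assoc, hZV, zero_mul]
  have a3 : ∀ r, L * (Y * r) = 0 := fun r => by rw [← mul_assoc, hLY, zero_mul]
  have a4 : ∀ r, Z * (Y * r) = Q * r := fun r => by rw [← mul_assoc, hZY]
  have a5 : ∀ r, Y * (Q * r) = Y * r := fun r => by rw [← mul_assoc, hYQ]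
  have a6 : ∀ r, Q * (Z * r) = Z * r := fun r => by rw [← mul_assoc, hQZ]
  have a7 : ∀ r, w * (w' * r) = r := fun r => by rw [← mul_assoc, hww', one_mul]
  have a8 : ∀ r, w' * (w * r) = r := fun r => by rw [← mul_assoc, hw'w, one_mul]
  have a9 : ∀ r, w * (Q * r) = Q * (w * r) := fun r => by rw [← mul_assoc, ← hQw, mul_assoc]
  have a10 : ∀ r, w' * (Q * r) = Q * (w' * r) := fun r => by
    rw [← mul_assoc, ← hQw', mul_assoc]
  have hQQ : Q * Q = Q := by
    calc Q * Q = Z * (Y * Q) := by rw [← hZY, mul_assoc, hZY]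
      _ = Q := by rw [hYQ, hZY]
  have a11 : ∀ r, Q * (Q * r) = Q * r := fun r => by rw [← mul_assoc, hQQ]
  simp only [mul_add, add_mul, mul_sub, sub_mul, mul_assoc, mul_one, one_mul, neg_mul, mul_neg,
    hLV, hZV, hLY, hZY, hYQ, hQZ, hww', hw'w, ← hQw, ← hQw', a1, a2, a3, a4, a5, a6, a7, a8, a9,
    a10, a11, mul_zero, zero_mul, neg_zero, add_zero, zero_add, neg_neg]
  abel
end Null

/-! ### The infinite swindle -/

section Swindle
variable {X A : Type*} [TopologicalSpace X] [CStarAlgebra A]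

/-- An identification of the ambient space with a countably infinite Hilbert sum of copies of
itself, seen inside the C⋆-algebra `A`: `j` is the inclusion of the first copy, `s` the shift onto
the remaining copies, and `Φ a` acts as `a` on every copy, so that `Φ a = a ⊕ Φ a` (this is
`rep`). -/
structure InfiniteRepetition (A : Type*) [CStarAlgebra A] where
  j : A
  s : A
  Φ : A →* A
  cont : Continuous Φ
  jj : star j * j = 1
  ss : star s * s = 1
  js : star j * s = 0
  sj : star s * j = 0
  sum : j * star j + s * star s = 1
  rep : ∀ a, Φ a = j * a * star j + s * Φ a * star s

/-- The swindle. If each `c x` is block diagonal, equal to the identity on the range of an isometry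
`V x`, then `c` is null. Splitting the range of `V` as `V j ⊕ V s`, both
`1 ⊕ Φ(c)⁻¹ ⊕ Φ(c)` (called `W1`) and `c ⊕ Φ(c)⁻¹ ⊕ Φ(c)` (called `W2`) are null by Whitehead's
lemma, the second one because `c ⊕ Φ(c)` is a copy of `Φ(c)`; and `c` is their quotient. -/
lemma nullFamily_of_fixes (R : InfiniteRepetition A) {c V : X → A} (hc : Continuous c)
    (hu : ∀ x, IsUnit (c x)) (hV : Continuous V) (hVV : ∀ x, star (V x) * V x = 1)
    (hcV : ∀ x, c x * V x = V x) (hVc : ∀ x, star (V x) * c x = star (V x)) :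
    NullFamily c := by
  obtain ⟨j, s, Φ, hΦ, jj, ss, js, sj, hsum, hrep⟩ := R
  have hci := continuous_ringInverse hc hu
  have b1 : ∀ r, star j * (j * r) = r := fun r => by rw [← mul_assoc, jj, one_mul]
  have b2 : ∀ r, star s * (s * r) = r := fun r => by rw [← mul_assoc, ss, one_mul]
  have b3 : ∀ r, star j * (s * r) = 0 := fun r => by rw [← mul_assoc, js, zero_mul]
  have b4 : ∀ r, star s * (j * r) = 0 := fun r => by rw [← mul_assoc, sj, zero_mul]
  have b5 : ∀ x, ∀ r, star (V x) * (V x * r) = r := fun x r => by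
    rw [← mul_assoc, hVV, one_mul]
  have hΦ1 : ∀ x, Φ (c x) * Φ (Ring.inverse (c x)) = 1 := fun x => by
    rw [← map_mul, Ring.mul_inverse_cancel _ (hu x), map_one]
  have hΦ2 : ∀ x, Φ (Ring.inverse (c x)) * Φ (c x) = 1 := fun x => by
    rw [← map_mul, Ring.inverse_mul_cancel _ (hu x), map_one]
  have hw : Continuous fun x => Φ (c x) := hΦ.comp hc
  have hw' : Continuous fun x => Φ (Ring.inverse (c x)) := hΦ.comp hci
  have hVs : Continuous fun x => star (V x) := hV.star
  have W1 := nullFamily_whitehead (Y := fun x => V x * s) (Z := fun x => star s * star (V x))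
    (V := fun x => V x * j) (L := fun x => star j * star (V x)) (Q := fun _ => 1)
    (by fun_prop) (by fun_prop) (by fun_prop) (by fun_prop) hw hw'
    (fun x => by simp only [mul_assoc, b5, jj]) (fun x => by simp only [mul_assoc, b5, sj])
    (fun x => by simp only [mul_assoc, b5, js]) (fun x => by simp only [mul_assoc, b5, ss])
    (fun x => by simp) (fun x => by simp) hΦ1 hΦ2 (fun x => by simp)
  have W2 := nullFamily_whitehead
    (Y := fun x => (1 - V x * star (V x)) * star j + V x * s * star s)
    (Z := fun x => j * (1 - V x * star (V x)) + s * star s * star (V x))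
    (V := fun x => V x * j) (L := fun x => star j * star (V x))
    (Q := fun x => j * (1 - V x * star (V x)) * star j + s * star s)
    (by fun_prop) (by fun_prop) (by fun_prop) (by fun_prop) hw hw'
    (fun x => by simp only [mul_assoc, b5, jj])
    (fun x => by
      simp only [mul_assoc, b5, jj, sub_mul, add_mul, mul_sub, mul_add, one_mul, sj, mul_zero,
        sub_self, add_zero])
    (fun x => by
      simp only [mul_assoc, b5, jj, sub_mul, add_mul, mul_sub, mul_add, one_mul, js, b3, mul_zero,
        sub_self, add_zero])
    (fun x => by
      simp only [mul_assoc, b5, b2, jj, sub_mul, add_mul, mul_sub, mul_add, one_mul, mul_one, hVV,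
        mul_zero, sub_self, add_zero]
      abel)
    (fun x => by
      simp only [mul_assoc, b1, b2, b3, b4, b5, b2, jj, sub_mul, add_mul, mul_sub, mul_add, one_mul,
        mul_one, hVV, mul_zero, sub_self, add_zero]
      abel)
    (fun x => by
      simp only [mul_assoc, b1, b2, b3, b4, b5, b2, jj, sub_mul, add_mul, mul_sub, mul_add, one_mul,
        mul_one, hVV, sj, mul_zero, sub_self, add_zero]
      abel) hΦ1 hΦ2
    (fun x => by
      rw [hrep (c x)]
      have h1 : ∀ r, c x * (V x * r) = V x * r := fun r => by rw [← mul_assoc, hcV]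
      have h2 : ∀ r, star (V x) * (c x * r) = star (V x) * r := fun r => by rw [← mul_assoc, hVc]
      simp only [mul_assoc, b1, b2, b3, b4, b5, b2, jj, sub_mul, add_mul, mul_sub, mul_add, one_mul,
        mul_one, hVV, mul_zero, sub_self, add_zero, h1, h2]
      )
  refine NullFamily.of_mul_right W1 (Eq.mp (congrArg _ (funext fun x => ?_)) W2)
  have hd : Ring.inverse (c x) * V x = V x := by
    conv_lhs => rw [← hcV x, ← mul_assoc, Ring.inverse_mul_cancel _ (hu x), one_mul]
  have h1 : ∀ r, c x * (V x * r) = V x * r := fun r => by rw [← mul_assoc, hcV]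
  have h2 : ∀ r, star (V x) * (c x * r) = star (V x) * r := fun r => by rw [← mul_assoc, hVc]
  have h3 : ∀ r, Ring.inverse (c x) * (V x * r) = V x * r := fun r => by rw [← mul_assoc, hd]
  have e1 : (Φ (Ring.inverse (c x)) - 1) *
      (j * (1 - V x * star (V x)) * star j + s * star s) = Φ (Ring.inverse (c x)) - 1 := by
    conv_rhs => rw [hrep (Ring.inverse (c x)), ← hsum]
    conv_lhs => rw [hrep (Ring.inverse (c x))]
    simp only [mul_assoc, b1, b2, b3, b4, b5, h3, jj, sub_mul, add_mul, mul_sub, mul_add, one_mul,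
        mul_one, hVV, mul_zero, sub_self, add_zero, zero_add]
    abel
  have e2 : ((1 - V x * star (V x)) * star j + V x * s * star s) * (Φ (c x) - 1) *
      (j * (1 - V x * star (V x)) + s * star s * star (V x))
      = c x - 1 + V x * s * (Φ (c x) - 1) * (star s * star (V x)) := by
    conv_lhs => rw [hrep (c x)]
    simp only [mul_assoc, b1, b2, b3, b4, b5, h1, h2, hcV, hVc, jj, js, sj, ss, sub_mul, add_mul,
      mul_sub, mul_add, one_mul, mul_one, hVV, mul_zero, sub_self, add_zero, zero_add, sub_zero]
    abel
  simp only [e1, e2]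
  simp only [mul_add, mul_one, ← mul_assoc, hcV]
  abel

end Swindle

/-! ### Reduction to moving a subspace -/

section Reduction
variable {X A : Type*} [TopologicalSpace X] [CStarAlgebra A]

/-- The block diagonal hypothesis of `nullFamily_of_fixes` can be weakened to a block triangular
one: the off-diagonal block is removed by a unipotent factor. -/
lemma nullFamily_of_fixes_right (R : InfiniteRepetition A) {a V : X → A} (ha : Continuous a)
    (hu : ∀ x, IsUnit (a x)) (hV : Continuous V) (hVV : ∀ x, star (V x) * V x = 1)
    (haV : ∀ x, a x * V x = V x) : NullFamily a := by
  have hVs : Continuous fun x => star (V x) := hV.star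
  have b5 : ∀ x, ∀ r, star (V x) * (V x * r) = r := fun x r => by
    rw [← mul_assoc, hVV, one_mul]
  have b6 : ∀ x, ∀ r, a x * (V x * r) = V x * r := fun x r => by rw [← mul_assoc, haV]
  have hN : NullFamily fun x => 1 + (V x * star (V x) - V x * star (V x) * a x) := by
    refine nullFamily_one_add_of_sq_zero (by fun_prop) fun x => ?_
    simp only [mul_sub, sub_mul, mul_assoc, b5, b6]
    abel
  refine NullFamily.of_mul_right hN
    (nullFamily_of_fixes R (V := V) (ha.mul hN.continuous)
      (fun x => (hu x).mul (hN.isUnit x)) hV hVV (fun x => ?_) (fun x => ?_))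
  · simp only [mul_sub, sub_mul, mul_add, add_mul, mul_one, one_mul, mul_assoc, b5, b6, haV, hVV,
      sub_self, add_zero]
  · simp only [mul_sub, sub_mul, mul_add, add_mul, mul_one, one_mul, mul_assoc, b5, b6, haV, hVV,
      sub_self, add_zero]
    abel

lemma norm_le_one_of_star_mul_self {A : Type*} [CStarAlgebra A] {a : A} (h : star a * a = 1) :
    ‖a‖ ≤ 1 := by
  rcases subsingleton_or_nontrivial A with _ | _
  · rw [Subsingleton.elim a 0, norm_zero]; exact zero_le_one
  · have := CStarRing.norm_star_mul_self (x := a)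
    rw [h, CStarRing.norm_one] at this
    nlinarith [norm_nonneg a]

/-- Let `B x` have square zero and be isometric on the range of the isometry `V x`, and suppose that
`B u⋆ B` has norm less than `1`. Then `u` is null. Indeed, writing `Δ = 1 - u B⋆ u B⋆`, one
has `(1 - u B⋆) (1 + B u⋆) u V = Δ B V` and `(1 - B) (1 + B⋆) B V = V`, so the product
`(1 - B) (1 + B⋆) Δ⁻¹ (1 - u B⋆) (1 + B u⋆)` of null families carries `u V` back to `V`, and
`nullFamily_of_fixes_right` applies to its product with `u`. -/
lemma nullFamily_of_move (R : InfiniteRepetition A) {u B V : X → A} (hu : Continuous u)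
    (hB : Continuous B) (hV : Continuous V) (huu : ∀ x, u x ∈ unitary A)
    (hB2 : ∀ x, B x * B x = 0) (hBu : ∀ x, ‖B x * star (u x) * B x‖ < 1)
    (hVV : ∀ x, star (V x) * V x = 1) (hBV : ∀ x, star (B x) * (B x * V x) = V x) :
    NullFamily u := by
  have hBs : Continuous fun x => star (B x) := hB.star
  have hus : Continuous fun x => star (u x) := hu.star
  have hΔ : ∀ x, ‖star (B x) * u x * star (B x)‖ < 1 := fun x => by
    rw [← norm_star]
    simpa only [star_mul, star_star, mul_assoc] using hBu x
  have uu : ∀ x, star (u x) * u x = 1 := fun x => (Unitary.mem_iff.1 (huu x)).1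
  have u1 : ∀ x r, star (u x) * (u x * r) = r := fun x r => by rw [← mul_assoc, uu, one_mul]
  have nu : ∀ x, ‖u x‖ ≤ 1 := fun x => norm_le_one_of_star_mul_self (uu x)
  have nus : ∀ x, ‖star (u x)‖ ≤ 1 := fun x => by rw [norm_star]; exact nu x
  have n1 : NullFamily fun x => 1 + B x * star (u x) := by
    refine nullFamily_one_add (by fun_prop) fun x => ?_
    rw [← mul_assoc]
    exact (norm_mul_le _ _).trans_lt
      ((mul_le_of_le_one_right (norm_nonneg _) (nus x)).trans_lt (hBu x))
  have n2 : NullFamily fun x => 1 + -(u x * star (B x)) := by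
    refine nullFamily_one_add (by fun_prop) fun x => ?_
    have : -(u x * star (B x)) * -(u x * star (B x)) = u x * (star (B x) * u x * star (B x)) := by
      noncomm_ring
    rw [this]
    exact (norm_mul_le _ _).trans_lt
      ((mul_le_of_le_one_left (norm_nonneg _) (nu x)).trans_lt (hΔ x))
  have n3 : NullFamily fun x => 1 + -(u x * (star (B x) * u x * star (B x))) := by
    refine nullFamily_one_add (by fun_prop) fun x => ?_
    have h1 : ‖u x * (star (B x) * u x * star (B x))‖ < 1 := (norm_mul_le _ _).trans_lt
      ((mul_le_of_le_one_left (norm_nonneg _) (nu x)).trans_lt (hΔ x))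
    rw [neg_mul_neg]
    refine (norm_mul_le _ _).trans_lt ?_
    nlinarith [norm_nonneg (u x * (star (B x) * u x * star (B x)))]
  have n4 : NullFamily fun x => 1 + star (B x) :=
    nullFamily_one_add_of_sq_zero hBs fun x => by rw [← star_mul, hB2, star_zero]
  have n5 : NullFamily fun x => 1 + -B x :=
    nullFamily_one_add_of_sq_zero hB.neg fun x => by rw [neg_mul_neg, hB2]
  have n := n5.mul (n4.mul (n3.inverse.mul (n2.mul n1)))
  refine NullFamily.of_mul_left n
    (nullFamily_of_fixes_right R (V := V) (n.continuous.mul hu) (fun x => (n.isUnit x).mul ?_)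
      hV hVV fun x => ?_)
  · exact (Unitary.toUnits (⟨u x, huu x⟩ : unitary A)).isUnit
  · have k : (1 + -(u x * star (B x))) * ((1 + B x * star (u x)) * (u x * V x))
        = (1 + -(u x * (star (B x) * u x * star (B x)))) * (B x * V x) := by
      simp only [add_mul, mul_add, one_mul, neg_mul, mul_assoc, u1, hBV]
      abel
    have hI := Ring.inverse_mul_cancel _ (n3.isUnit x)
    generalize Ring.inverse (1 + -(u x * (star (B x) * u x * star (B x)))) = I at hI ⊢
    simp only [mul_assoc] at hI k ⊢
    rw [k, ← mul_assoc I, hI, one_mul]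
    have b : ∀ r, B x * (B x * r) = 0 := fun r => by rw [← mul_assoc, hB2, zero_mul]
    simp only [add_mul, mul_add, one_mul, neg_mul, hBV, b]
    abel

end Reduction

section Unitarization
open CFC
variable {A : Type*} [CStarAlgebra A] [PartialOrder A] [StarOrderedRing A]

lemma isUnit_sqrt_star_mul {a : A} (ha : IsUnit a) : IsUnit (sqrt (star a * a)) := by
  have h : IsUnit (star a * a) := ha.star.mul ha
  have e := CFC.sqrt_mul_sqrt_self (star a * a) (star_mul_self_nonneg a)
  rw [← e] at h
  exact ((Commute.refl _).isUnit_mul_iff.1 h).1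

/-- The unitary factor in the polar decomposition of an invertible element. -/
lemma unitarize_mem {a : A} (ha : IsUnit a) :
    a * Ring.inverse (sqrt (star a * a)) ∈ unitary A := by
  have hs := isUnit_sqrt_star_mul ha
  have e := CFC.sqrt_mul_sqrt_self (star a * a) (star_mul_self_nonneg a)
  have sa : star (sqrt (star a * a)) = sqrt (star a * a) :=
    (IsSelfAdjoint.of_nonneg (CFC.sqrt_nonneg _)).star_eq
  set s := sqrt (star a * a) with hs'
  have st : star (Ring.inverse s) = Ring.inverse s := by
    rw [← Ring.inverse_star, sa]
  have h1 : star (a * Ring.inverse s) * (a * Ring.inverse s) = 1 := by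
    rw [star_mul, st]
    calc Ring.inverse s * star a * (a * Ring.inverse s)
        = Ring.inverse s * (star a * a) * Ring.inverse s := by simp only [mul_assoc]
      _ = (Ring.inverse s * s) * (s * Ring.inverse s) := by rw [← e]; simp only [mul_assoc]
      _ = 1 := by rw [Ring.inverse_mul_cancel _ hs, Ring.mul_inverse_cancel _ hs, one_mul]
  have hv : IsUnit (a * Ring.inverse s) := ha.mul hs.ringInverse
  rw [Unitary.mem_iff]
  refine ⟨h1, ?_⟩
  obtain ⟨v, hv⟩ := hv
  rw [← hv] at h1 ⊢
  have h2 : star (v : A) = ↑v⁻¹ := Units.eq_inv_of_mul_eq_one_right h1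
  rw [h2, Units.mul_inv]

/-- A homotopy through invertible elements is turned into one through unitaries by taking the
unitary factor of the polar decomposition. -/
theorem contractible_unitary_of_nullFamily
    (h : NullFamily (fun x : unitary A => (x : A))) : ContractibleSpace (unitary A) := by
  obtain ⟨F, hc, hu, h0, h1⟩ := h
  rw [contractible_iff_id_nullhomotopic]
  refine ⟨1, ContinuousMap.Homotopic.symm ⟨⟨⟨fun z => ⟨_, unitarize_mem (hu z)⟩, ?_⟩, ?_, ?_⟩⟩⟩
  · refine Continuous.subtype_mk (hc.mul (continuous_ringInverse ?_
      fun z => isUnit_sqrt_star_mul (hu z))) _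
    exact CFC.continuousOn_sqrt.comp_continuous (hc.star.mul hc) fun z => star_mul_self_nonneg _
  · intro x
    ext
    simp [h0]
  · intro x
    ext
    simp [h1]

end Unitarization

/-! ### Coloured covers and gluing of isometries -/

section Cover
variable {X : Type*} [TopologicalSpace X]

/-- Every open cover of a paracompact space, indexed by its points, has a locally finite refinement
indexed by finite sets `σ`, in which members whose index sets have the same cardinality are
disjoint, so that the cardinality is a colouring. Given a partition of unity `φ`, the set
`O σ` consists of the points at which each `φ i` with `i ∈ σ` is positive and exceeds every `φ j`
with `j ∉ σ` (and is empty if `σ` is). An index at which `φ` is maximal at `x` belongs to every `σ` with `x ∈ O σ`. -/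
lemma exists_colored_cover [NormalSpace X] [ParacompactSpace X] (U : X → Set X)
    (hU : ∀ x, IsOpen (U x)) (hx : ∀ x, x ∈ U x) :
    ∃ O : Finset X → Set X, (∀ σ, IsOpen (O σ)) ∧ LocallyFinite O ∧ (∀ x, ∃ σ, x ∈ O σ) ∧
      (∀ σ τ, σ ≠ τ → σ.card = τ.card → ¬ (O σ ∩ O τ).Nonempty) ∧
      (∀ σ x, x ∈ O σ → ∀ i ∈ σ, x ∈ U i) ∧
      ∀ x, ∃ i, x ∈ U i ∧ ∀ σ, x ∈ O σ → i ∈ σ := by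
  classical
  obtain ⟨φ, hφ⟩ := PartitionOfUnity.exists_isSubordinate (s := Set.univ) isClosed_univ U hU
    (fun x _ => Set.mem_iUnion.2 ⟨x, hx x⟩)
  have hmem : ∀ i x, 0 < φ i x → x ∈ U i := fun i x h =>
    hφ i (subset_tsupport _ (Function.mem_support.2 h.ne'))
  have hlf := φ.locallyFinite
  have hmax : ∀ x, ∃ i, 0 < φ i x ∧ ∀ j, φ j x ≤ φ i x := by
    intro x
    obtain ⟨i₀, hi₀⟩ := φ.exists_pos (Set.mem_univ x)
    obtain ⟨i, hi, him⟩ := Finset.exists_max_image (φ.finsupport x) (fun i => φ i x)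
      ⟨i₀, (φ.mem_finsupport x).2 (Function.mem_support.2 hi₀.ne')⟩
    have h0 : 0 < φ i x := lt_of_le_of_ne (φ.nonneg i x)
      (Ne.symm (Function.mem_support.1 ((φ.mem_finsupport x).1 hi)))
    refine ⟨i, h0, fun j => ?_⟩
    by_cases hj : φ j x = 0
    · rw [hj]; exact h0.le
    · exact him j ((φ.mem_finsupport x).2 hj)
  refine ⟨fun σ => {x | σ.Nonempty ∧ ∀ i ∈ σ, 0 < φ i x ∧ ∀ j ∉ σ, φ j x < φ i x},
    ?_, ?_, ?_, ?_, ?_, ?_⟩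
  · intro σ
    refine isOpen_iff_mem_nhds.2 fun x ⟨hσ, h⟩ => ?_
    obtain ⟨W, hW, hF⟩ := hlf x
    have h1 : ∀ᶠ y in nhds x, ∀ i ∈ σ, 0 < φ i y ∧ ∀ j ∈ hF.toFinset, j ∉ σ → φ j y < φ i y := by
      refine (Filter.eventually_all_finset σ).2 fun i hi => ?_
      refine ((φ i).continuous.continuousAt.eventually (lt_mem_nhds (h i hi).1)).and
        ((Filter.eventually_all_finset _).2 fun j _ => ?_)
      by_cases hj : j ∈ σ
      · exact Filter.Eventually.of_forall fun y h => absurd hj h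
      · exact ((φ j).continuous.continuousAt.eventually_lt (φ i).continuous.continuousAt
          ((h i hi).2 j hj)).mono fun y hy _ => hy
    filter_upwards [h1, hW] with y hy hyW
    refine ⟨hσ, fun i hi => ⟨(hy i hi).1, fun j hj => ?_⟩⟩
    by_cases h0 : φ j y = 0
    · rw [h0]; exact (hy i hi).1
    · exact (hy i hi).2 j (hF.mem_toFinset.2 ⟨y, h0, hyW⟩) hj
  · intro x
    obtain ⟨W, hW, hF⟩ := hlf x
    refine ⟨W, hW, (Finset.finite_toSet hF.toFinset.powerset).subset ?_⟩
    rintro σ ⟨y, ⟨-, hy⟩, hyW⟩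
    simp only [Finset.coe_powerset, Set.mem_preimage, Set.mem_powerset_iff]
    intro i hi
    exact hF.mem_toFinset.2 ⟨y, (hy i hi).1.ne', hyW⟩
  · intro x
    obtain ⟨i, hi, him⟩ := hmax x
    have hs : ∀ j, j ∈ (φ.finsupport x).filter (fun j => φ j x = φ i x) ↔ φ j x = φ i x := by
      intro j
      rw [Finset.mem_filter, φ.mem_finsupport]
      exact ⟨fun h => h.2, fun h => ⟨by rw [Function.mem_support, h]; exact hi.ne', h⟩⟩
    refine ⟨(φ.finsupport x).filter (fun j => φ j x = φ i x), ⟨i, (hs i).2 rfl⟩, fun k hk => ?_⟩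
    rw [hs] at hk
    refine ⟨hk ▸ hi, fun j hj => ?_⟩
    rw [hs] at hj
    rw [hk]
    exact lt_of_le_of_ne (him j) hj
  · rintro σ τ hne hc ⟨x, ⟨-, hσ⟩, ⟨-, hτ⟩⟩
    have h1 : ¬ σ ⊆ τ := fun h => hne (Finset.eq_of_subset_of_card_le h hc.ge)
    have h2 : ¬ τ ⊆ σ := fun h => hne (Finset.eq_of_subset_of_card_le h hc.le).symm
    obtain ⟨i, hi, hi'⟩ := Finset.not_subset.1 h1
    obtain ⟨j, hj, hj'⟩ := Finset.not_subset.1 h2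
    exact lt_asymm ((hσ i hi).2 j hj') ((hτ j hj).2 i hi')
  · rintro σ x ⟨-, h⟩ i hi
    exact hmem i x (h i hi).1
  · intro x
    obtain ⟨i, hi, him⟩ := hmax x
    refine ⟨i, hmem i x hi, ?_⟩
    rintro σ ⟨⟨k, hk⟩, h⟩
    by_contra hiσ
    exact (him k).not_gt ((h k hk).2 i hiσ)

end Cover

section Glue
variable {X ι A : Type*} [TopologicalSpace X] [CStarAlgebra A]

/-- The combination `∑ √ρᵢ Tᵢ` of the operators `Tᵢ`; the square roots make it an isometry when
the `Tᵢ` are isometries with orthogonal ranges. -/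
noncomputable def glue (ρ : PartitionOfUnity ι X) (T : ι → A) (x : X) : A :=
  ∑ᶠ i, √(ρ i x) • T i

lemma glue_eq_sum (ρ : PartitionOfUnity ι X) (T : ι → A) (x : X) :
    glue ρ T x = ∑ i ∈ ρ.finsupport x, √(ρ i x) • T i := by
  refine finsum_eq_sum_of_support_subset _ fun i hi => ?_
  rw [Finset.mem_coe, ρ.mem_finsupport]
  intro h
  exact hi (by simp only at h; simp [h])

lemma continuous_glue (ρ : PartitionOfUnity ι X) (T : ι → A) : Continuous (glue ρ T) := by
  refine continuous_finsum (fun i => by fun_prop) (ρ.locallyFinite.subset fun i x hx => ?_)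
  intro h
  exact hx (by simp [h])

lemma star_glue_mul_glue {ρ : PartitionOfUnity ι X} {O : ι → Set X} (hρ : ρ.IsSubordinate O)
    {T : ι → A} (h1 : ∀ i, star (T i) * T i = 1)
    (h2 : ∀ i j, i ≠ j → (O i ∩ O j).Nonempty → star (T i) * T j = 0) (x : X) :
    star (glue ρ T x) * glue ρ T x = 1 := by
  classical
  have hO : ∀ i ∈ ρ.finsupport x, x ∈ O i := fun i hi =>
    hρ i (subset_tsupport _ ((ρ.mem_finsupport x).1 hi))
  rw [glue_eq_sum, star_sum, Finset.sum_mul_sum]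
  have : ∀ i ∈ ρ.finsupport x, ∑ j ∈ ρ.finsupport x, star (√(ρ i x) • T i) * (√(ρ j x) • T j)
      = ρ i x • (1 : A) := by
    intro i hi
    rw [Finset.sum_eq_single_of_mem i hi]
    · rw [star_smul, smul_mul_smul_comm, h1, star_trivial, Real.mul_self_sqrt (ρ.nonneg i x)]
    · intro j hj hji
      rw [star_smul, smul_mul_smul_comm, h2 i j hji.symm ⟨x, hO i hi, hO j hj⟩, smul_zero]
  rw [Finset.sum_congr rfl this, ← Finset.sum_smul, ρ.sum_finsupport (Set.mem_univ x), one_smul]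

lemma mul_glue {ρ : PartitionOfUnity ι X} {T : ι → A} {x : X} {c : A}
    (h : ∀ i ∈ ρ.finsupport x, c * T i = T i) : c * glue ρ T x = glue ρ T x := by
  rw [glue_eq_sum, Finset.mul_sum]
  exact Finset.sum_congr rfl fun i hi => by rw [mul_smul_comm, h i hi]

end Glue

/-! ### Operators attached to a Hilbert basis -/

section BasisOps
open scoped InnerProductSpace BoundedContinuousFunction
variable {H κ : Type*} [NormedAddCommGroup H] [InnerProductSpace ℂ H] [CompleteSpace H]

/-- The diagonal operator with given uniformly bounded blocks on a Hilbert sum. -/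
lemma exists_blockOp {ι : Type*} {G : ι → Type*} [∀ i, NormedAddCommGroup (G i)]
    [∀ i, InnerProductSpace ℂ (G i)] {V : ∀ i, G i →ₗᵢ[ℂ] H} (hV : IsHilbertSum ℂ G V)
    (a : ∀ i, G i →L[ℂ] G i) {C : ℝ} (hC : 0 ≤ C) (ha : ∀ i, ‖a i‖ ≤ C) :
    ∃ Φ : H →L[ℂ] H, (∀ i v, Φ (V i v) = V i (a i v)) ∧ ‖Φ‖ ≤ C := by
  classical
  have hle : ∀ (f : lp G 2) i, ‖a i (f i)‖ ≤ ‖((C : ℂ) • f : lp G 2) i‖ := fun f i => by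
    rw [lp.coeFn_smul, Pi.smul_apply, norm_smul, Complex.norm_real, Real.norm_of_nonneg hC]
    exact (a i).le_of_opNorm_le (ha i) _
  let L : lp G 2 →ₗ[ℂ] lp G 2 :=
    { toFun := fun f => ⟨fun i => a i (f i), (lp.memℓp ((C : ℂ) • f)).mono' (hle f)⟩
      map_add' := fun f g => by ext i; simp; rfl
      map_smul' := fun c f => by ext i; simp }
  have hL : ∀ f, ‖L f‖ ≤ C * ‖f‖ := fun f => by
    refine (lp.norm_mono two_ne_zero (hle f)).trans ?_
    rw [norm_smul, Complex.norm_real, Real.norm_of_nonneg hC]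
  let e := hV.linearIsometryEquiv
  refine ⟨(e.symm.toContinuousLinearEquiv : lp G 2 →L[ℂ] H) ∘L (L.mkContinuous C hL) ∘L
    (e.toContinuousLinearEquiv : H →L[ℂ] lp G 2), fun i v => ?_, ?_⟩
  · have h1 : e (V i v) = lp.single 2 i v := by
      rw [← hV.linearIsometryEquiv_symm_apply_single v]
      exact e.apply_symm_apply _
    have h2 : L (lp.single 2 i v) = lp.single 2 i (a i v) := by
      ext k
      change a k (lp.single 2 i v k) = _
      by_cases h : k = i
      · subst h; simp
      · simp [lp.single_apply, h]
    change e.symm (L (e (V i v))) = _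
    rw [h1, h2]
    exact hV.linearIsometryEquiv_symm_apply_single _
  · refine ContinuousLinearMap.opNorm_le_bound _ hC fun v => ?_
    change ‖e.symm (L (e v))‖ ≤ _
    rw [LinearIsometryEquiv.norm_map, ← LinearIsometryEquiv.norm_map e v]
    exact hL _

variable (b : HilbertBasis κ ℂ H)

lemma HilbertBasis.op_ext {S T : H →L[ℂ] H} (h : ∀ m, S (b m) = T (b m)) : S = T := by
  refine ContinuousLinearMap.ext_on
    ((Submodule.dense_iff_topologicalClosure_eq_top).2 b.dense_span) ?_
  rintro _ ⟨m, rfl⟩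
  exact h m

lemma HilbertBasis.vec_ext {v w : H} (h : ∀ m, ⟪b m, v⟫_ℂ = ⟪b m, w⟫_ℂ) : v = w := by
  apply b.repr.injective
  ext m
  simpa only [b.repr_apply_apply] using h m

open Classical in
lemma HilbertBasis.inner_eq (m n : κ) : ⟪b m, b n⟫_ℂ = if m = n then 1 else 0 :=
  orthonormal_iff_ite.1 b.orthonormal m n

/-- An operator whose values on basis vectors are dominated by a geometric series is small. -/
lemma HilbertBasis.norm_op_le [Encodable κ] {S : H →L[ℂ] H} {ε : ℝ} (hε : 0 ≤ ε)
    (h : ∀ m, ‖S (b m)‖ ≤ ε * (1 / 2) ^ Encodable.encode m) : ‖S‖ ≤ 2 * ε := by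
  refine ContinuousLinearMap.opNorm_le_bound _ (by positivity) fun v => ?_
  have h1 : HasSum (fun m => S (b.repr v m • b m)) (S v) := (b.hasSum_repr v).mapL S
  have hs : Summable fun m : κ => (1 / 2 : ℝ) ^ Encodable.encode m := summable_geometric_two_encode
  have h2 : ∑' m : κ, (1 / 2 : ℝ) ^ Encodable.encode m ≤ 2 := by
    refine le_trans ?_ tsum_geometric_two.le
    exact Summable.tsum_le_tsum_of_inj _ Encodable.encode_injective (fun _ _ => by positivity)
      (fun _ => le_rfl) hs summable_geometric_two
  have h3 : ∀ m, ‖S (b.repr v m • b m)‖ ≤ ‖v‖ * ε * (1 / 2) ^ Encodable.encode m := fun m => by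
    rw [map_smul, norm_smul, mul_assoc]
    refine mul_le_mul ?_ (h m) (norm_nonneg _) (norm_nonneg _)
    exact (lp.norm_apply_le_norm two_ne_zero (b.repr v) m).trans_eq (b.repr.norm_map v)
  rw [← h1.tsum_eq]
  refine (tsum_of_norm_bounded (hs.hasSum.mul_left (‖v‖ * ε)) h3).trans ?_
  have : 0 ≤ ‖v‖ * ε := by positivity
  nlinarith

lemma HilbertBasis.exists_iso (t : κ → κ) (ht : Function.Injective t) :
    ∃ T : H →L[ℂ] H, ∀ m, T (b m) = b (t m) := by
  classical
  have ho := (b.orthonormal.comp t ht).orthogonalFamily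
  refine ⟨ho.linearIsometry.toContinuousLinearMap ∘L
    (b.repr.toContinuousLinearEquiv : H →L[ℂ] _), fun m => ?_⟩
  change ho.linearIsometry (b.repr (b m)) = _
  rw [b.repr_self]
  erw [ho.linearIsometry_apply_single]
  simp [LinearIsometry.toSpanSingleton_apply]

open Classical in
/-- The isometry `b m ↦ b (t m)` attached to an injective map `t` of the index set (and `0` if `t`
is not injective). -/
noncomputable def HilbertBasis.iso (t : κ → κ) : H →L[ℂ] H :=
  if ht : Function.Injective t then (b.exists_iso t ht).choose else 0

lemma HilbertBasis.iso_apply {t : κ → κ} (ht : Function.Injective t) (m : κ) :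
    b.iso t (b m) = b (t m) := by
  rw [HilbertBasis.iso, dif_pos ht]
  exact (b.exists_iso t ht).choose_spec m

lemma HilbertBasis.star_iso_mul {t : κ → κ} (ht : Function.Injective t) :
    star (b.iso t) * b.iso t = 1 := by
  refine b.op_ext fun n => b.vec_ext fun m => ?_
  rw [ContinuousLinearMap.star_eq_adjoint, mul_apply_eq_comp,
    ContinuousLinearMap.adjoint_inner_right, b.iso_apply ht, b.iso_apply ht,
    one_apply_eq_self, b.inner_eq, b.inner_eq]
  by_cases hmn : m = n
  · simp [hmn]
  · simp [hmn, ht.ne hmn]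

lemma HilbertBasis.star_iso_mul_of_disjoint {t t' : κ → κ} (ht : Function.Injective t)
    (ht' : Function.Injective t') (h : ∀ m n, t m ≠ t' n) :
    star (b.iso t) * b.iso t' = 0 := by
  refine b.op_ext fun n => b.vec_ext fun m => ?_
  rw [ContinuousLinearMap.star_eq_adjoint, mul_apply_eq_comp,
    ContinuousLinearMap.adjoint_inner_right, b.iso_apply ht, b.iso_apply ht', b.inner_eq]
  simp [h m n]

variable [TopologicalSpace κ] [DiscreteTopology κ]

lemma HilbertBasis.exists_diag (g : κ →ᵇ ℝ) :
    ∃ T : H →L[ℂ] H, (∀ m, T (b m) = (g m : ℂ) • b m) ∧ ‖T‖ ≤ ‖g‖ := by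
  have hs := b.orthonormal.isHilbertSum b.dense_span.ge
  obtain ⟨T, h1, h2⟩ := exists_blockOp hs
    (fun m => (g m : ℂ) • ContinuousLinearMap.id ℂ ℂ) (norm_nonneg g) (fun m => by
      rw [norm_smul, Complex.norm_real, ContinuousLinearMap.norm_id, mul_one]
      exact g.norm_coe_le_norm m)
  refine ⟨T, fun m => ?_, h2⟩
  simpa [LinearIsometry.toSpanSingleton_apply] using h1 m 1

/-- The diagonal operator `b m ↦ g m • b m` with bounded real coefficients `g`. -/
noncomputable def HilbertBasis.diag (g : κ →ᵇ ℝ) : H →L[ℂ] H := (b.exists_diag g).choose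

lemma HilbertBasis.diag_apply (g : κ →ᵇ ℝ) (m : κ) : b.diag g (b m) = (g m : ℂ) • b m :=
  (b.exists_diag g).choose_spec.1 m

lemma HilbertBasis.norm_diag_le (g : κ →ᵇ ℝ) : ‖b.diag g‖ ≤ ‖g‖ :=
  (b.exists_diag g).choose_spec.2

lemma HilbertBasis.diag_mul (g g' : κ →ᵇ ℝ) : b.diag (g * g') = b.diag g * b.diag g' :=
  b.op_ext fun m => by
    rw [mul_apply_eq_comp, b.diag_apply, b.diag_apply, map_smul, b.diag_apply, smul_smul,
      BoundedContinuousFunction.mul_apply, Complex.ofReal_mul, mul_comm]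

lemma HilbertBasis.diag_sub (g g' : κ →ᵇ ℝ) : b.diag (g - g') = b.diag g - b.diag g' :=
  b.op_ext fun m => by
    simp [HilbertBasis.diag_apply, sub_smul]

lemma HilbertBasis.diag_add (g g' : κ →ᵇ ℝ) : b.diag (g + g') = b.diag g + b.diag g' :=
  b.op_ext fun m => by
    simp [HilbertBasis.diag_apply, add_smul]

lemma HilbertBasis.continuous_diag : Continuous b.diag := by
  refine (LipschitzWith.of_dist_le_mul (K := 1) fun g g' => ?_).continuous
  rw [dist_eq_norm, dist_eq_norm, ← b.diag_sub, NNReal.coe_one, one_mul]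
  exact b.norm_diag_le _

lemma HilbertBasis.star_diag (g : κ →ᵇ ℝ) : star (b.diag g) = b.diag g := by
  refine b.op_ext fun n => b.vec_ext fun m => ?_
  rw [ContinuousLinearMap.star_eq_adjoint, ContinuousLinearMap.adjoint_inner_right,
    b.diag_apply, b.diag_apply, inner_smul_left, inner_smul_right, b.inner_eq]
  split_ifs with h
  · subst h; simp
  · simp

open Classical in
/-- The indicator function of a set of indices, as a bounded continuous function. -/
noncomputable def ind (S : Set κ) : κ →ᵇ ℝ :=
  BoundedContinuousFunction.ofNormedAddCommGroupDiscrete (fun m => if m ∈ S then 1 else 0) 1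
    fun m => by split_ifs <;> simp

open Classical in
lemma ind_apply (S : Set κ) (m : κ) : ind S m = if m ∈ S then 1 else 0 := rfl

/-- The orthogonal projection onto the closed span of the `b m` with `m ∈ S`. -/
noncomputable def HilbertBasis.proj (S : Set κ) : H →L[ℂ] H := b.diag (ind S)

lemma HilbertBasis.proj_apply_of_mem {S : Set κ} {m : κ} (h : m ∈ S) : b.proj S (b m) = b m := by
  simp [HilbertBasis.proj, b.diag_apply, ind_apply, h]

lemma HilbertBasis.proj_apply_of_notMem {S : Set κ} {m : κ} (h : m ∉ S) :
    b.proj S (b m) = 0 := by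
  simp [HilbertBasis.proj, b.diag_apply, ind_apply, h]

lemma HilbertBasis.norm_proj_le (S : Set κ) : ‖b.proj S‖ ≤ 1 := by
  refine (b.norm_diag_le _).trans ?_
  rw [BoundedContinuousFunction.norm_le zero_le_one]
  intro m
  rw [ind_apply]
  split_ifs <;> simp

lemma HilbertBasis.proj_eq_mul_add {S S₁ S₂ : Set κ} (hd : Disjoint S₁ S₂) (h : S ⊆ S₁ ∪ S₂) :
    b.proj S = b.proj S * (b.proj S₁ + b.proj S₂) := by
  rw [HilbertBasis.proj, HilbertBasis.proj, HilbertBasis.proj, ← b.diag_add, ← b.diag_mul]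
  congr 1
  ext m
  simp only [BoundedContinuousFunction.coe_mul, BoundedContinuousFunction.coe_add, Pi.mul_apply,
    Pi.add_apply, ind_apply]
  by_cases h0 : m ∈ S
  · rcases h h0 with h1 | h1
    · simp [h0, h1, Set.disjoint_left.1 hd h1]
    · simp [h0, h1, Set.disjoint_right.1 hd h1]
  · simp [h0]

lemma HilbertBasis.norm_proj_le_add {S S₁ S₂ : Set κ} (hd : Disjoint S₁ S₂) (h : S ⊆ S₁ ∪ S₂)
    (v : H) : ‖b.proj S v‖ ≤ ‖b.proj S₁ v‖ + ‖b.proj S₂ v‖ := by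
  rw [b.proj_eq_mul_add hd h, mul_apply_eq_comp]
  refine ((b.proj S).le_of_opNorm_le (b.norm_proj_le S) _).trans ?_
  rw [one_mul, add_apply]
  exact norm_add_le _ _

/-- Projections onto sets of indices escaping every index tend strongly to `0`. -/
lemma HilbertBasis.proj_small {S : ℕ → Set κ} (hS : ∀ m, ∃ N, ∀ M ≥ N, m ∉ S M) (v : H) {ε : ℝ}
    (hε : 0 < ε) : ∃ N, ∀ M ≥ N, ‖b.proj (S M) v‖ ≤ ε := by
  have hd : Dense (Submodule.span ℂ (Set.range b) : Set H) :=
    (Submodule.dense_iff_topologicalClosure_eq_top).2 b.dense_span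
  obtain ⟨w, hw, hvw⟩ := hd.exists_dist_lt v hε
  have hw0 : ∃ N, ∀ M ≥ N, b.proj (S M) w = 0 := by
    clear hvw
    induction hw using Submodule.span_induction with
    | mem x hx =>
      obtain ⟨m, rfl⟩ := hx
      obtain ⟨N, hN⟩ := hS m
      exact ⟨N, fun M hM => b.proj_apply_of_notMem (hN M hM)⟩
    | zero => exact ⟨0, fun _ _ => map_zero _⟩
    | add x y _ _ hx hy =>
      obtain ⟨N, hN⟩ := hx
      obtain ⟨N', hN'⟩ := hy
      exact ⟨max N N', fun M hM => by
        rw [map_add, hN M (le_of_max_le_left hM), hN' M (le_of_max_le_right hM), add_zero]⟩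
    | smul c x _ hx =>
      obtain ⟨N, hN⟩ := hx
      exact ⟨N, fun M hM => by rw [map_smul, hN M hM, smul_zero]⟩
  obtain ⟨N, hN⟩ := hw0
  refine ⟨N, fun M hM => ?_⟩
  have : b.proj (S M) v = b.proj (S M) (v - w) := by rw [map_sub, hN M hM, sub_zero]
  rw [this]
  refine ((b.proj _).le_of_opNorm_le (b.norm_proj_le _) _).trans ?_
  rw [one_mul, ← dist_eq_norm]
  exact hvw.le

lemma HilbertBasis.norm_proj_finset_le (F : Finset κ) (v : H) :
    ‖b.proj (F : Set κ) v‖ ≤ ∑ m ∈ F, ‖⟪b m, v⟫_ℂ‖ := by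
  classical
  have : b.proj (F : Set κ) = ∑ m ∈ F, (innerSL ℂ (b m)).smulRight (b m) := by
    refine b.op_ext fun n => ?_
    simp only [sum_apply, ContinuousLinearMap.smulRight_apply, innerSL_apply_apply,
      b.inner_eq, ite_smul, one_smul, zero_smul, Finset.sum_ite_eq']
    split_ifs with h
    · exact b.proj_apply_of_mem (by simpa using h)
    · exact b.proj_apply_of_notMem (by simpa using h)
  rw [this, sum_apply]
  refine (norm_sum_le _ _).trans (Finset.sum_le_sum fun m _ => ?_)
  rw [ContinuousLinearMap.smulRight_apply, norm_smul, b.orthonormal.1 m, mul_one,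
    innerSL_apply_apply]

/-- A sequence of distinct basis vectors tends weakly to `0`. -/
lemma HilbertBasis.inner_tendsto_zero {f : ℕ → κ} (hf : Function.Injective f) (v : H) :
    Filter.Tendsto (fun s => ‖⟪v, b (f s)⟫_ℂ‖) Filter.atTop (nhds 0) := by
  have h1 := ((b.orthonormal.comp f hf).inner_products_summable (x := v)).tendsto_atTop_zero
  have h2 := h1.sqrt
  simp only [Real.sqrt_zero] at h2
  refine h2.congr fun s => ?_
  rw [Real.sqrt_sq (norm_nonneg _), ← inner_conj_symm, RCLike.norm_conj]
  rfl

/-- By weak convergence, `P a b_s → 0` in norm along distinct basis vectors `b_s` when `P` is a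
projection onto finitely many basis vectors. -/
lemma HilbertBasis.proj_finset_small {f : ℕ → κ} (hf : Function.Injective f) (F : Finset κ)
    (a : H →L[ℂ] H) {ε : ℝ} (hε : 0 < ε) :
    ∀ᶠ s in Filter.atTop, ‖b.proj (F : Set κ) (a (b (f s)))‖ ≤ ε := by
  have h : Filter.Tendsto (fun s => ∑ m ∈ F, ‖⟪b m, a (b (f s))⟫_ℂ‖) Filter.atTop (nhds 0) := by
    rw [← Finset.sum_const_zero (s := F)]
    refine tendsto_finsetSum _ fun m _ => ?_
    simp only [← ContinuousLinearMap.adjoint_inner_left]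
    exact b.inner_tendsto_zero hf _
  filter_upwards [h.eventually (gt_mem_nhds hε)] with s hs
  exact (b.norm_proj_finset_le F _).trans hs.le

end BasisOps

/-! ### Infinite repetition on a separable Hilbert space -/

section Rep
open scoped InnerProductSpace
variable {H κ : Type*} [NormedAddCommGroup H] [InnerProductSpace ℂ H] [CompleteSpace H]

/-- A bijection `κ ≃ ℕ × κ` cuts the basis into countably many copies of itself; `J k` is the
inclusion of the `k`-th copy. -/
lemma nonempty_infiniteRepetition (b : HilbertBasis κ ℂ H) (e : κ ≃ ℕ × κ) :
    Nonempty (InfiniteRepetition (H →L[ℂ] H)) := by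
  have ht : ∀ k, Function.Injective fun m => e.symm (k, m) := fun k m n h => by
    simpa using h
  have hs : Function.Injective fun m => e.symm ((e m).1 + 1, (e m).2) := fun m n h => by
    have h := e.symm.injective h
    simp only [Prod.mk.injEq, add_left_inj] at h
    exact e.injective (Prod.ext h.1 h.2)
  let J : ℕ → H →L[ℂ] H := fun k => b.iso fun m => e.symm (k, m)
  let s : H →L[ℂ] H := b.iso fun m => e.symm ((e m).1 + 1, (e m).2)
  have hJ : ∀ k m, J k (b m) = b (e.symm (k, m)) := fun k m => b.iso_apply (ht k) m
  have hJJ : ∀ k, star (J k) * J k = 1 := fun k => b.star_iso_mul (ht k)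
  have hJJ' : ∀ k l, k ≠ l → star (J k) * J l = 0 := fun k l h =>
    b.star_iso_mul_of_disjoint (ht k) (ht l) fun m n he => h
      (by simpa using congrArg Prod.fst (e.symm.injective he))
  have hsJ : ∀ k, s * J k = J (k + 1) := fun k => b.op_ext fun m => by
    rw [mul_apply_eq_comp, hJ, hJ, b.iso_apply hs]
    simp
  have hss : star s * s = 1 := b.star_iso_mul hs
  have hJs : star (J 0) * s = 0 := b.star_iso_mul_of_disjoint (ht 0) hs fun m n he => by
    simpa using congrArg Prod.fst (e.symm.injective he)
  have hsJ0 : star s * J 0 = 0 := b.star_iso_mul_of_disjoint hs (ht 0) fun m n he => by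
    simpa using congrArg Prod.fst (e.symm.injective he)
  have hext : ∀ S T : H →L[ℂ] H, (∀ k, S * J k = T * J k) → S = T := fun S T h =>
    b.op_ext fun m => by
      have := DFunLike.congr_fun (h (e m).1) (b (e m).2)
      simpa [hJ] using this
  have hn : ∀ k v, ‖J k v‖ = ‖v‖ := fun k =>
    (ContinuousLinearMap.norm_map_iff_adjoint_comp_self (J k)).2 (hJJ k)
  let V : ∀ _ : ℕ, H →ₗᵢ[ℂ] H := fun k => ⟨(J k).toLinearMap, hn k⟩
  have hV : IsHilbertSum ℂ (fun _ : ℕ => H) V := by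
    refine IsHilbertSum.mk (fun k l hkl v w => ?_) ?_
    · change ⟪J k v, J l w⟫_ℂ = 0
      rw [← ContinuousLinearMap.adjoint_inner_right, ← ContinuousLinearMap.star_eq_adjoint,
        ← mul_apply_eq_comp, hJJ' k l hkl]
      simp
    · rw [← b.dense_span]
      refine Submodule.topologicalClosure_mono (Submodule.span_le.2 ?_)
      rintro _ ⟨m, rfl⟩
      refine Submodule.mem_iSup_of_mem (e m).1 ⟨b (e m).2, ?_⟩
      change J _ _ = _
      rw [hJ]
      simp
  have hex : ∀ a : H →L[ℂ] H, ∃ Φ : H →L[ℂ] H, (∀ k, Φ * J k = J k * a) ∧ ‖Φ‖ ≤ ‖a‖ := fun a => by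
    obtain ⟨Φ, h1, h2⟩ := exists_blockOp hV (fun _ => a) (norm_nonneg a) fun _ => le_rfl
    exact ⟨Φ, fun k => ContinuousLinearMap.ext fun v => h1 k v, h2⟩
  choose Φ hΦ hΦn using hex
  have hsub : ∀ a c, Φ a - Φ c = Φ (a - c) := fun a c => hext _ _ fun k => by
    rw [sub_mul, hΦ, hΦ, hΦ, mul_sub]
  refine ⟨⟨J 0, s, ⟨⟨Φ, ?_⟩, ?_⟩, ?_, hJJ 0, hss, hJs, hsJ0, ?_, ?_⟩⟩
  · exact hext _ _ fun k => by rw [hΦ, mul_one, one_mul]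
  · intro a c
    exact hext _ _ fun k => by
      change Φ (a * c) * J k = Φ a * Φ c * J k
      rw [hΦ, mul_assoc, hΦ, ← mul_assoc, ← mul_assoc, hΦ]
  · refine (LipschitzWith.of_dist_le_mul (K := 1) fun a c => ?_).continuous
    rw [dist_eq_norm, dist_eq_norm, NNReal.coe_one, one_mul]
    change ‖Φ a - Φ c‖ ≤ _
    rw [hsub]
    exact hΦn _
  · refine hext _ _ fun k => ?_
    rcases k with _ | k
    · rw [add_mul, mul_assoc, hJJ, mul_assoc, hsJ0]; simp
    · rw [add_mul, mul_assoc, hJJ' _ _ (Nat.succ_ne_zero k).symm, ← hsJ, mul_assoc,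
        ← mul_assoc (star s), hss]; simp
  · intro a
    change Φ a = J 0 * a * star (J 0) + s * Φ a * star s
    refine hext _ _ fun k => ?_
    rcases k with _ | k
    · rw [add_mul, mul_assoc, hJJ, mul_assoc _ (star s), hsJ0, hΦ]; simp
    · rw [add_mul, mul_assoc _ (star (J 0)), hJJ' _ _ (Nat.succ_ne_zero k).symm, hΦ, ← hsJ,
        mul_assoc _ (star s), ← mul_assoc (star s), hss, one_mul, mul_assoc s (Φ a), hΦ]
      simp [mul_assoc]

lemma Orthonormal.countable_of_separable [TopologicalSpace.SeparableSpace H] {w : Set H}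
    (hw : Orthonormal ℂ ((↑) : w → H)) : w.Countable := by
  have h : ∀ v ∈ w, ∀ v' ∈ w, v ≠ v' → 1 ≤ dist v v' := fun v hv v' hv' hne => by
    have h1 : ‖v‖ = 1 := hw.1 ⟨v, hv⟩
    have h2 : ‖v'‖ = 1 := hw.1 ⟨v', hv'⟩
    have h3 : ⟪v, v'⟫_ℂ = 0 := hw.2 (i := ⟨v, hv⟩) (j := ⟨v', hv'⟩) (by simpa using hne)
    have h4 := @norm_sub_sq ℂ H _ _ _ v v'
    rw [h1, h2, h3] at h4
    rw [dist_eq_norm]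
    simp at h4
    nlinarith [norm_nonneg (v - v')]
  refine Set.PairwiseDisjoint.countable_of_isOpen (s := fun v => Metric.ball v (1 / 2)) ?_
    (fun v _ => Metric.isOpen_ball) fun v _ => ⟨v, Metric.mem_ball_self (by norm_num)⟩
  intro v hv v' hv' hne
  refine Metric.ball_disjoint_ball ?_
  norm_num
  exact h v hv v' hv' hne

/-- A Hilbert basis indexed by any prescribed denumerable type. -/
lemma nonempty_hilbertBasis [TopologicalSpace.SeparableSpace H] (h : ¬FiniteDimensional ℂ H)
    (κ : Type) [Denumerable κ] : Nonempty (HilbertBasis κ ℂ H) := by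
  obtain ⟨w, b, hb⟩ := exists_hilbertBasis ℂ H
  have ho : Orthonormal ℂ ((↑) : w → H) := hb ▸ b.orthonormal
  have hc : Countable w := ho.countable_of_separable.to_subtype
  have hi : Infinite w := by
    by_contra hfin
    rw [not_infinite_iff_finite] at hfin
    refine h ?_
    have := Fintype.ofFinite w
    have hs := b.dense_span
    have : FiniteDimensional ℂ (Submodule.span ℂ (Set.range b)) :=
      FiniteDimensional.span_of_finite ℂ (Set.finite_range b)
    rw [IsClosed.submodule_topologicalClosure_eq (Submodule.closed_of_finiteDimensional _)] at hs
    rw [hs] at this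
    exact Module.finite_def.2 (Module.Finite.iff_fg.1 this)
  obtain ⟨hd⟩ := nonempty_denumerable w
  let e : κ ≃ w := Denumerable.equiv₂ κ w
  refine ⟨HilbertBasis.mk (v := b ∘ e) (b.orthonormal.comp e e.injective) ?_⟩
  rw [e.surjective.range_comp, b.dense_span]

end Rep

/-! ### The block lemma -/

section Block
variable {H : Type*} [NormedAddCommGroup H] [InnerProductSpace ℂ H] [CompleteSpace H]

/-- The index set of the Hilbert basis. The left summand carries the subspaces that are moved: the
index `inl (n, l)` is the vector of colour `n` at level `l`. The right summand is the room into
which they are moved: `inr (c, e, s)` has colour `c`, and `s` ranges over the infinitely many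
possible targets for the basis vector with code `e`. -/
abbrev KIdx : Type := (ℕ × ℕ) ⊕ (ℕ × ℕ × ℕ)

/-- The indices `inl (n, l)` whose level `l` lies in `A` and whose colour `n` is at most `l`. The
latter restriction leaves finitely many indices at each level. -/
def lev (A : Set ℕ) : Set KIdx := Sum.inl '' {p | p.1 ≤ p.2 ∧ p.2 ∈ A}

lemma lev_finite (N : ℕ) : (lev (Set.Iio N)).Finite := by
  refine Set.Finite.image _ (((Set.finite_Iio N).prod (Set.finite_Iio N)).subset ?_)
  rintro ⟨n, l⟩ ⟨h1, h2⟩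
  exact ⟨lt_of_le_of_lt h1 h2, h2⟩

/-- Given finitely many operators `a i`, there are a set of levels `A`, large for a fixed
nonprincipal ultrafilter, and an isometry `T` sending each basis vector to a vector of colour `c` in
the right summand, such that every `P a i T P` is small, where `P` is the projection onto
`lev A`.

The levels are cut into successive intervals `[L k, L (k + 1))`, chosen so that the targets of the
vectors of level below `L (k + 1)` can be selected with the `a i`-images of their `T`-images almost
orthogonal to the levels below `L (k + 1)` (by weak convergence to zero) and to the levels from
`L (k + 2)` on (by strong convergence of tails). The set `A` is the union of the intervals of one
parity, whichever is large, so that only these two ranges of levels matter. Since the ultrafilter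
is fixed, finitely many such sets of levels have infinite intersection. -/
lemma exists_block (b : HilbertBasis KIdx ℂ H) {ι : Type*} (σ : Finset ι) (a : ι → H →L[ℂ] H)
    (c : ℕ) {ε : ℝ} (hε : 0 < ε) :
    ∃ A ∈ Filter.hyperfilter ℕ, ∃ t : KIdx → ℕ, ∀ i ∈ σ,
      ‖b.proj (lev A) * a i * b.iso (fun m => Sum.inr (c, Encodable.encode m, t m)) *
        b.proj (lev A)‖ ≤ ε := by
  have hS : ∀ (N : ℕ) (m : KIdx), ∃ s : ℕ, ∀ i ∈ σ,
      ‖b.proj (lev (Set.Iio N)) (a i (b (Sum.inr (c, Encodable.encode m, s))))‖ ≤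
        ε / 4 * (1 / 2) ^ Encodable.encode m := fun N m => by
    have hf : Function.Injective fun s : ℕ => (Sum.inr (c, Encodable.encode m, s) : KIdx) :=
      fun s s' h => by simpa using h
    have := (Filter.eventually_all_finset σ).2 fun i _ =>
      b.proj_finset_small hf (lev_finite N).toFinset (a i)
        (ε := ε / 4 * (1 / 2) ^ Encodable.encode m) (by positivity)
    simpa only [Set.Finite.coe_toFinset] using this.exists
  choose S hS using hS
  -- Once the targets `S N m` are fixed, only finitely many vectors are involved, and the levels
  -- beyond some `M` contribute little to their images.
  have hM : ∀ N : ℕ, ∃ M > N, ∀ m ∈ (lev_finite N).toFinset, ∀ i ∈ σ,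
      ‖b.proj (lev (Set.Ici M)) (a i (b (Sum.inr (c, Encodable.encode m, S N m))))‖ ≤
        ε / 4 * (1 / 2) ^ Encodable.encode m := fun N => by
    have h1 := (Filter.eventually_all_finset (lev_finite N).toFinset).2 fun m _ =>
      (Filter.eventually_all_finset σ).2 fun i _ => Filter.eventually_atTop.2
        (b.proj_small (S := fun M => lev (Set.Ici M)) (fun m => by
          rcases m with ⟨n, l⟩ | m
          · refine ⟨l + 1, fun M hM h => ?_⟩
            simp only [lev, Set.mem_image, Sum.inl.injEq, exists_eq_right, Set.mem_ofPred_eq,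
              Set.mem_Ici] at h
            omega
          · exact ⟨0, fun M _ h => by simp [lev] at h⟩)
          (a i (b (Sum.inr (c, Encodable.encode m, S N m))))
          (ε := ε / 4 * (1 / 2) ^ Encodable.encode m) (by positivity))
    obtain ⟨M, h, hMN⟩ := (h1.and (Filter.eventually_gt_atTop N)).exists
    exact ⟨M, hMN, h⟩
  choose M hMN hM using hM
  let L : ℕ → ℕ := fun k => M^[k] 0
  have hL1 : ∀ k, L (k + 1) = M (L k) := fun k => Function.iterate_succ_apply' M k 0
  have hLm : StrictMono L := strictMono_nat_of_lt_succ fun k => by rw [hL1]; exact hMN _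
  have hk : ∀ l, ∃ k, L k ≤ l ∧ l < L (k + 1) := fun l => by
    have hex : ∃ k, l < L (k + 1) := ⟨l, lt_of_lt_of_le (Nat.lt_succ_self l) (hLm.id_le _)⟩
    classical
    refine ⟨Nat.find hex, ?_, Nat.find_spec hex⟩
    rcases h : Nat.find hex with _ | k
    · exact Nat.zero_le _
    · exact not_lt.1 (Nat.find_min hex (m := k) (by omega))
  choose k hk1 hk2 using hk
  obtain ⟨A, hA, hpar⟩ : ∃ A ∈ Filter.hyperfilter ℕ, ∀ l ∈ A, ∀ l' ∈ A,
      (Even (k l) ↔ Even (k l')) := by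
    rcases Ultrafilter.mem_or_compl_mem (Filter.hyperfilter ℕ) {l | Even (k l)} with h | h
    · exact ⟨_, h, fun l hl l' hl' => iff_of_true hl hl'⟩
    · exact ⟨_, h, fun l hl l' hl' => iff_of_false hl hl'⟩
  let t : KIdx → ℕ := Sum.elim (fun p => S (L (k p.2 + 1)) (Sum.inl p)) fun _ => 0
  have ht : Function.Injective fun m : KIdx => (Sum.inr (c, Encodable.encode m, t m) : KIdx) :=
    fun m m' h => by
      simp only [Sum.inr.injEq, Prod.mk.injEq, Encodable.encode_inj] at h
      exact h.2.1
  refine ⟨A, hA, t, fun i hi => ?_⟩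
  have : ε = 2 * (ε / 2) := by ring
  rw [this]
  refine b.norm_op_le (by positivity) fun m => ?_
  rw [mul_apply_eq_comp, mul_apply_eq_comp, mul_apply_eq_comp]
  by_cases hm : m ∈ lev A
  · rw [b.proj_apply_of_mem hm, b.iso_apply ht]
    obtain ⟨⟨n, l⟩, ⟨hnl, hl⟩, rfl⟩ := hm
    simp only at hnl hl
    refine (b.norm_proj_le_add (S₁ := lev (Set.Iio (L (k l + 1))))
      (S₂ := lev (Set.Ici (L (k l + 1 + 1)))) ?_ ?_ _).trans ?_
    · refine Set.disjoint_left.2 ?_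
      rintro _ ⟨⟨n', l'⟩, ⟨-, h1⟩, rfl⟩ h2
      simp only [lev, Set.mem_image, Sum.inl.injEq, exists_eq_right, Set.mem_ofPred_eq,
              Set.mem_Ici, Set.mem_Iio] at h1 h2
      have := hLm (Nat.lt_succ_self (k l + 1))
      simp only [Nat.succ_eq_add_one] at this
      omega
    · rintro _ ⟨⟨n', l'⟩, ⟨h1, h2⟩, rfl⟩
      have hp := hpar l hl l' h2
      simp only at h1 h2
      -- `l'` cannot lie in the interval following that of `l`, because of the parity.
      rcases lt_trichotomy (k l') (k l + 1) with h | h | h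
      · exact Or.inl ⟨(n', l'), ⟨h1, (hk2 l').trans_le (hLm.monotone h)⟩, rfl⟩
      · rw [h, Nat.even_add_one] at hp
        tauto
      · exact Or.inr ⟨(n', l'), ⟨h1, (hLm.monotone h).trans (hk1 l')⟩, rfl⟩
    · have e1 := hS (L (k l + 1)) (Sum.inl (n, l)) i hi
      have e2 := hM (L (k l + 1)) (Sum.inl (n, l))
        ((Set.Finite.mem_toFinset _).2 ⟨(n, l), ⟨hnl, hk2 l⟩, rfl⟩) i hi
      rw [← hL1] at e2
      refine (add_le_add e1 e2).trans (le_of_eq ?_)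
      ring
  · rw [b.proj_apply_of_notMem hm]
    simp only [map_zero, norm_zero]
    positivity

end Block

/-! ### Cutoffs and assembly -/

section Cutoff
open scoped BoundedContinuousFunction
variable {X κ ι : Type*} [TopologicalSpace X] [NormalSpace X] [TopologicalSpace κ]
  [DiscreteTopology κ]

/-- Diagonal coefficients `g x`, depending continuously on `x` for the sup norm, that vanish off
`S i` where `ρ i` is nonzero and equal `1` at the indices lying in `S i` for all `i` with `x ∈ O i`.
They are the product of the functions `1 - β i • 1_{(S i)ᶜ}`, with `β i` a Urysohn function equal to
`1` on the support of `ρ i` and supported in `O i`. -/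
lemma exists_cutoff (ρ : PartitionOfUnity ι X) {O : ι → Set X} (hO : ∀ i, IsOpen (O i))
    (hfin : LocallyFinite O) (hρ : ρ.IsSubordinate O) (S : ι → Set κ) :
    ∃ g : X → κ →ᵇ ℝ, Continuous g ∧ (∀ x, ‖g x‖ ≤ 1) ∧
      (∀ x i, ρ i x ≠ 0 → ∀ m ∉ S i, g x m = 0) ∧
      ∀ x m, (∀ i, x ∈ O i → m ∈ S i) → g x m = 1 := by
  have hβ : ∀ i, ∃ β : C(X, ℝ), (∀ x ∉ O i, β x = 0) ∧ (∀ x, ρ i x ≠ 0 → β x = 1) ∧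
      ∀ x, β x ∈ Set.Icc (0 : ℝ) 1 := fun i => by
    obtain ⟨β, h0, h1, h2⟩ := exists_continuous_zero_one_of_isClosed (hO i).isClosed_compl
      (isClosed_tsupport (ρ i)) (Set.disjoint_left.2 fun x hx hx' => hx (hρ i hx'))
    exact ⟨β, fun x hx => h0 hx, fun x hx => h1 (subset_tsupport _ hx), h2⟩
  choose β h0 h1 h2 using hβ
  let F : ι → X → κ →ᵇ ℝ := fun i x => 1 - β i x • ind (S i)ᶜ
  have hF : ∀ i x, x ∉ O i → F i x = 1 := fun i x hx => by simp [F, h0 i x hx]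
  have hlf : LocallyFinite fun i => Function.mulSupport (F i) :=
    hfin.subset fun i x hx => by
      by_contra h
      exact hx (hF i x h)
  have hms : ∀ x, Function.HasFiniteMulSupport fun i => F i x := fun x =>
    (hfin.point_finite x).subset fun i hi => by
      by_contra h
      exact hi (hF i x h)
  have hFm : ∀ i x m, F i x m = 1 - β i x * ind (S i)ᶜ m := fun i x m => by simp [F]
  have hF01 : ∀ i x m, 0 ≤ F i x m ∧ F i x m ≤ 1 := fun i x m => by
    have := h2 i x
    rw [hFm, ind_apply]
    split_ifs <;> constructor <;> linarith [this.1, this.2]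
  let ev : κ → (κ →ᵇ ℝ) →* ℝ := fun m => ⟨⟨fun f => f m, rfl⟩, fun _ _ => rfl⟩
  have hev : ∀ x m, (∏ᶠ i, F i x) m = ∏ᶠ i, F i x m := fun x m => map_finprod (ev m) (hms x)
  have hms' : ∀ x m, Function.HasFiniteMulSupport fun i => F i x m := fun x m =>
    (hms x).subset fun i hi h => hi (by simp only at h ⊢; rw [h]; rfl)
  refine ⟨fun x => ∏ᶠ i, F i x, continuous_finprod (fun i => by fun_prop) hlf, fun x => ?_,
    fun x i hi m hm => ?_, fun x m h => ?_⟩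
  · rw [BoundedContinuousFunction.norm_le zero_le_one]
    intro m
    rw [hev, finprod_eq_prod _ (hms' x m), Real.norm_of_nonneg
      (Finset.prod_nonneg fun i _ => (hF01 i x m).1)]
    exact Finset.prod_le_one (fun i _ => (hF01 i x m).1) fun i _ => (hF01 i x m).2
  · rw [hev]
    refine finprod_eq_zero _ i ?_ (hms' x m)
    rw [hFm, h1 i x hi, ind_apply, if_pos (show m ∈ (S i)ᶜ from hm)]
    norm_num
  · rw [hev]
    refine finprod_eq_one_of_forall_eq_one fun i => ?_
    by_cases hx : x ∈ O i
    · rw [hFm, ind_apply, if_neg (show ¬ m ∈ (S i)ᶜ from not_not.2 (h i hx))]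
      norm_num
    · rw [hF i x hx]
      rfl

end Cutoff

section Assembly
open scoped BoundedContinuousFunction
variable {X H : Type*} [TopologicalSpace X] [T2Space X] [ParacompactSpace X]
  [NormedAddCommGroup H] [InnerProductSpace ℂ H] [CompleteSpace H]

lemma sum_half_pow_card_le {α : Type*} (s : Finset (Finset α))
    (hs : Set.InjOn Finset.card (s : Set (Finset α))) :
    ∑ σ ∈ s, (1 / 2 : ℝ) ^ σ.card ≤ 2 := by
  classical
  rw [← Finset.sum_image (f := fun n => (1 / 2 : ℝ) ^ n) hs]
  calc _ ≤ ∑' n : ℕ, (1 / 2 : ℝ) ^ n :=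
        summable_geometric_two.sum_le_tsum _ fun n _ => by positivity
    _ = 2 := tsum_geometric_two

/-- The moving data. `T x` is a glued isometry and `C x` a self-adjoint diagonal contraction with
`C T = 0`, which is the identity on the vectors whose levels lie in all the `A σ` relevant at `x`.
Near a point `u x` is within `1 / 2` of a fixed `u i`, and the block lemma gives
`‖C u_i⋆ T_σ C‖ ≤ 2 ^ (-card σ) / 8`; the index sets `σ` active at `x` have distinct cardinalities,
so these errors add up to at most `1 / 4`. -/
lemma exists_move (b : HilbertBasis KIdx ℂ H) {u : X → H →L[ℂ] H} (hu : Continuous u) :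
    ∃ (O : Finset X → Set X) (A : Finset X → Set ℕ) (C T : X → H →L[ℂ] H) ,
      LocallyFinite O ∧ (∀ σ, A σ ∈ Filter.hyperfilter ℕ) ∧
      Continuous C ∧ Continuous T ∧ (∀ x, star (C x) = C x) ∧ (∀ x, star (T x) * T x = 1) ∧
      (∀ x, C x * T x = 0) ∧ (∀ x, ‖C x * star (u x) * T x * C x‖ < 1) ∧
      ∀ x m, (∀ σ, x ∈ O σ → m ∈ lev (A σ)) → C x (b m) = b m := by
  obtain ⟨O, hO, hfin, hcov, hdis, hmem, hi⟩ := exists_colored_cover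
    (fun x₀ => {x | ‖u x - u x₀‖ < 1 / 2})
    (fun x₀ => isOpen_lt (by fun_prop) continuous_const) (fun x => by simp)
  choose A hA t ht using fun σ : Finset X => exists_block b σ (fun i => star (u i)) σ.card
    (ε := (1 / 8) * (1 / 2) ^ σ.card) (by positivity)
  obtain ⟨ρ, hρ⟩ := PartitionOfUnity.exists_isSubordinate isClosed_univ O hO
    (fun x _ => Set.mem_iUnion.2 (hcov x))
  obtain ⟨g, hg, hg1, hg0, hgone⟩ := exists_cutoff ρ hO hfin hρ fun σ => lev (A σ)
  let τ : Finset X → KIdx → KIdx := fun σ m => Sum.inr (σ.card, Encodable.encode m, t σ m)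
  have hτ : ∀ σ, Function.Injective (τ σ) := fun σ m m' h => by
    simp only [τ, Sum.inr.injEq, Prod.mk.injEq, Encodable.encode_inj] at h
    exact h.2.1
  have hρO : ∀ {x σ}, σ ∈ ρ.finsupport x → x ∈ O σ := fun {x σ} h =>
    hρ σ (subset_tsupport _ ((ρ.mem_finsupport x).1 h))
  have hT1 : ∀ x, star (glue ρ (fun σ => b.iso (τ σ)) x) * glue ρ (fun σ => b.iso (τ σ)) x = 1 :=
    star_glue_mul_glue hρ (fun σ => b.star_iso_mul (hτ σ)) fun σ σ' hne hn =>
      b.star_iso_mul_of_disjoint (hτ σ) (hτ σ') fun m n h => by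
        simp only [τ, Sum.inr.injEq, Prod.mk.injEq] at h
        exact hdis σ σ' hne h.1 hn
  have hC1 : ∀ x, ‖b.diag (g x)‖ ≤ 1 := fun x => (b.norm_diag_le _).trans (hg1 x)
  have hCinr : ∀ x p, b.diag (g x) (b (Sum.inr p)) = 0 := fun x p => by
    obtain ⟨σ, hσ⟩ := ρ.exists_pos (Set.mem_univ x)
    rw [b.diag_apply, hg0 x σ hσ.ne' _ (by simp [lev])]
    simp
  have hPC : ∀ x, ∀ σ ∈ ρ.finsupport x, b.proj (lev (A σ)) * b.diag (g x) = b.diag (g x) :=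
    fun x σ hσ => b.op_ext fun m => by
      rw [mul_apply_eq_comp, b.diag_apply, map_smul]
      by_cases hm : m ∈ lev (A σ)
      · rw [b.proj_apply_of_mem hm]
      · rw [hg0 x σ ((ρ.mem_finsupport x).1 hσ) m hm]
        simp
  have hCP : ∀ x, ∀ σ ∈ ρ.finsupport x, b.diag (g x) * b.proj (lev (A σ)) = b.diag (g x) :=
    fun x σ hσ => b.op_ext fun m => by
      rw [mul_apply_eq_comp]
      by_cases hm : m ∈ lev (A σ)
      · rw [b.proj_apply_of_mem hm]
      · rw [b.proj_apply_of_notMem hm, b.diag_apply,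
          hg0 x σ ((ρ.mem_finsupport x).1 hσ) m hm]
        simp
  refine ⟨O, A, fun x => b.diag (g x), glue ρ fun σ => b.iso (τ σ), hfin, hA,
    b.continuous_diag.comp hg, continuous_glue _ _, fun x => b.star_diag _, hT1,
    fun x => ?_, fun x => ?_, fun x m h => ?_⟩
  · rw [glue_eq_sum, Finset.mul_sum]
    refine Finset.sum_eq_zero fun σ _ => ?_
    rw [mul_smul_comm]
    have : b.diag (g x) * b.iso (τ σ) = 0 := b.op_ext fun m => by
      rw [mul_apply_eq_comp, b.iso_apply (hτ σ)]
      exact hCinr x _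
    rw [this, smul_zero]
  · obtain ⟨i, hxi, hiσ⟩ := hi x
    set C := b.diag (g x) with hC
    set T := glue ρ (fun σ => b.iso (τ σ)) x with hT
    have hTn : ‖T‖ ≤ 1 := norm_le_one_of_star_mul_self (hT1 x)
    have hCn : ‖C‖ ≤ 1 := hC1 x
    have hsplit : C * star (u x) * T * C =
        C * star (u x - u i) * T * C + C * star (u i) * T * C := by
      rw [star_sub]; noncomm_ring
    have e1 : ‖C * star (u x - u i) * T * C‖ < 1 / 2 := by
      refine lt_of_le_of_lt ?_ (show ‖u x - u i‖ < 1 / 2 from hxi)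
      calc ‖C * star (u x - u i) * T * C‖
          ≤ ‖C‖ * ‖star (u x - u i)‖ * ‖T‖ * ‖C‖ :=
            (norm_mul_le _ _).trans (mul_le_mul_of_nonneg_right ((norm_mul_le _ _).trans
              (mul_le_mul_of_nonneg_right (norm_mul_le _ _) (norm_nonneg _))) (norm_nonneg _))
        _ ≤ 1 * ‖star (u x - u i)‖ * 1 * 1 := by gcongr
        _ = ‖u x - u i‖ := by rw [norm_star]; ring
    have e2 : ‖C * star (u i) * T * C‖ ≤ 1 / 4 := by
      have : C * star (u i) * T * C =
          ∑ σ ∈ ρ.finsupport x, √(ρ σ x) • (C * star (u i) * b.iso (τ σ) * C) := by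
        rw [hT, glue_eq_sum, Finset.mul_sum, Finset.sum_mul]
        exact Finset.sum_congr rfl fun σ _ => by rw [mul_smul_comm, smul_mul_assoc]
      rw [this]
      calc _ ≤ ∑ σ ∈ ρ.finsupport x, (1 / 8) * (1 / 2 : ℝ) ^ σ.card :=
            norm_sum_le_of_le _ fun σ hσ => ?_
        _ ≤ 1 / 8 * 2 := by
            rw [← Finset.mul_sum]
            refine mul_le_mul_of_nonneg_left (sum_half_pow_card_le _ ?_) (by norm_num)
            intro σ hσ σ' hσ' h
            by_contra hne
            exact hdis σ σ' hne h ⟨x, hρO hσ, hρO hσ'⟩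
        _ = 1 / 4 := by norm_num
      have h1 : C * star (u i) * b.iso (τ σ) * C = C *
          (b.proj (lev (A σ)) * star (u i) * b.iso (τ σ) * b.proj (lev (A σ))) * C := by
        calc _ = (C * b.proj (lev (A σ))) * star (u i) * b.iso (τ σ) *
              (b.proj (lev (A σ)) * C) := by rw [hCP x σ hσ, hPC x σ hσ]
          _ = _ := by noncomm_ring
      rw [norm_smul, Real.norm_of_nonneg (Real.sqrt_nonneg _), h1]
      have h2 : √(ρ σ x) ≤ 1 := Real.sqrt_le_one.2 (ρ.le_one σ x)
      have h3 := ht σ i (hiσ σ (hρO hσ))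
      calc _ ≤ 1 * (1 * ((1 / 8) * (1 / 2 : ℝ) ^ σ.card) * 1) := by
            refine mul_le_mul h2 ?_ (norm_nonneg _) zero_le_one
            refine (norm_mul_le _ _).trans (mul_le_mul ?_ hCn (norm_nonneg _) (by positivity))
            exact (norm_mul_le _ _).trans (mul_le_mul hCn h3 (norm_nonneg _) zero_le_one)
        _ = _ := by ring
    rw [hsplit]
    refine (norm_add_le _ _).trans_lt ?_
    linarith
  · rw [b.diag_apply, hgone x m h]
    simp

/-- A continuous family of isometries `V x` into the fixed spaces of the `C x` above. Near any point
finitely many of the sets of levels `A σ` are relevant; they have infinite intersection because they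
belong to one ultrafilter. This room allows local choices of `V`, which are given orthogonal ranges
by means of colours and then glued. -/
lemma exists_fixed (b : HilbertBasis KIdx ℂ H) {O : Finset X → Set X} {A : Finset X → Set ℕ}
    (hO : LocallyFinite O) (hA : ∀ σ, A σ ∈ Filter.hyperfilter ℕ) {C : X → H →L[ℂ] H}
    (hC : ∀ x m, (∀ σ, x ∈ O σ → m ∈ lev (A σ)) → C x (b m) = b m) :
    ∃ V : X → H →L[ℂ] H, Continuous V ∧ (∀ x, star (V x) * V x = 1) ∧ ∀ x, C x * V x = V x := by
  choose U hUx hU using fun x => hO x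
  let A' : X → Set ℕ := fun x => ⋂ σ ∈ (hU x).toFinset, A σ
  have hA' : ∀ x, A' x ∈ Filter.hyperfilter ℕ := fun x =>
    (Filter.biInter_finset_mem _).2 fun σ _ => hA σ
  obtain ⟨O', hO', -, hcov, hdis, hmem, hi⟩ := exists_colored_cover (fun x => interior (U x))
    (fun x => isOpen_interior) (fun x => mem_interior_iff_mem_nhds.2 (hUx x))
  have hinf : ∀ τ : Finset X, ((⋂ i ∈ τ, A' i) ∩ Set.Ici τ.card).Infinite := fun τ hfin => by
    have h1 : (⋂ i ∈ τ, A' i) ∩ Set.Ici τ.card ∈ Filter.hyperfilter ℕ :=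
      Filter.inter_mem ((Filter.biInter_finset_mem _).2 fun i _ => hA' i)
        (Filter.hyperfilter_le_cofinite (by
          rw [← Nat.cofinite_eq_atTop.symm]; exact Filter.Ici_mem_atTop _))
    exact Filter.notMem_hyperfilter_of_finite hfin h1
  let s : Finset X → KIdx → KIdx := fun τ m =>
    Sum.inl (τ.card, ((hinf τ).natEmbedding _ (Encodable.encode m) : ℕ))
  have hs : ∀ τ, Function.Injective (s τ) := fun τ m m' h => by
    simp only [s, Sum.inl.injEq, Prod.mk.injEq, true_and, SetLike.coe_eq_coe] at h
    exact Encodable.encode_injective ((hinf τ).natEmbedding _ |>.injective (Subtype.ext h))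
  obtain ⟨ρ, hρ⟩ := PartitionOfUnity.exists_isSubordinate isClosed_univ O' hO'
    (fun x _ => Set.mem_iUnion.2 (hcov x))
  refine ⟨glue ρ fun τ => b.iso (s τ), continuous_glue _ _,
    star_glue_mul_glue hρ (fun τ => b.star_iso_mul (hs τ)) fun τ τ' hne hn =>
      b.star_iso_mul_of_disjoint (hs τ) (hs τ') fun m n h => ?_,
    fun x => mul_glue fun τ hτ => b.op_ext fun m => ?_⟩
  · simp only [s, Sum.inl.injEq, Prod.mk.injEq] at h
    exact hdis τ τ' hne h.1 hn
  · rw [mul_apply_eq_comp, b.iso_apply (hs τ)]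
    refine hC x _ fun σ hσ => ?_
    have hx : x ∈ O' τ := hρ τ (subset_tsupport _ ((ρ.mem_finsupport x).1 hτ))
    obtain ⟨i, hxi, hiτ⟩ := hi x
    have h1 := ((hinf τ).natEmbedding _ (Encodable.encode m)).2
    refine ⟨(τ.card, _), ⟨h1.2, ?_⟩, rfl⟩
    have h2 := Set.mem_iInter₂.1 h1.1 i (hiτ τ hx)
    exact Set.mem_iInter₂.1 h2 σ ((Set.Finite.mem_toFinset _).2 ⟨x, hσ, interior_subset hxi⟩)

/-- Every norm-continuous family of unitaries over a paracompact Hausdorff space is null: apply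
`nullFamily_of_move` with `B = T C`. -/
theorem nullFamily_unitary [TopologicalSpace.SeparableSpace H] (h : ¬FiniteDimensional ℂ H)
    {u : X → H →L[ℂ] H} (hu : Continuous u) (huu : ∀ x, u x ∈ unitary (H →L[ℂ] H)) :
    NullFamily u := by
  obtain ⟨b⟩ := nonempty_hilbertBasis (H := H) h KIdx
  obtain ⟨R⟩ := nonempty_infiniteRepetition b (Denumerable.equiv₂ KIdx (ℕ × KIdx))
  obtain ⟨O, A, C, T, hfin, hA, hCc, hTc, hCs, hT1, hCT, hsmall, hC1⟩ := exists_move b hu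
  obtain ⟨V, hVc, hV1, hCV⟩ := exists_fixed b hfin hA hC1
  refine nullFamily_of_move R hu (B := fun x => T x * C x) (V := V) (hTc.mul hCc) hVc huu
    (fun x => ?_) (fun x => ?_) hV1 fun x => ?_
  · rw [mul_assoc, ← mul_assoc (C x), hCT, zero_mul, mul_zero]
  · have : T x * C x * star (u x) * (T x * C x) = T x * (C x * star (u x) * T x * C x) := by
      noncomm_ring
    rw [this]
    calc _ ≤ ‖T x‖ * _ := norm_mul_le _ _
      _ ≤ 1 * _ := mul_le_mul_of_nonneg_right (norm_le_one_of_star_mul_self (hT1 x))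
          (norm_nonneg _)
      _ < 1 := by rw [one_mul]; exact hsmall x
  · rw [star_mul, hCs, mul_assoc (T x), hCV, mul_assoc, ← mul_assoc (star (T x)), hT1, one_mul,
      hCV]

end Assembly

/-- (Kuiper) The unitary group of an infinite-dimensional separable complex Hilbert space,
with the operator-norm topology, is contractible. -/
theorem kuiper_unitary_group_contractible
    (H : Type*) [NormedAddCommGroup H] [InnerProductSpace ℂ H] [CompleteSpace H]
    [TopologicalSpace.SeparableSpace H] (h : ¬FiniteDimensional ℂ H) :
    ContractibleSpace (unitary (H →L[ℂ] H)) :=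
  contractible_unitary_of_nullFamily
    (nullFamily_unitary h continuous_subtype_val fun x => x.2)
end
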